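/- arXiv:1504.03500 — 2 statements merged into one kernel-verified Lean document; each statement's English description precedes it below -/
import Mathlib

section
/- Let G be a cubic graph and P* a valid factor of G minimizing the number of components and, subject to that, the number of odd cycles. Then for any odd cycle C of P*, any two distinct vertices of C are joined by edges of G to two distinct odd path components of P* (in particular, each vertex of C is adjacent to a vertex of an odd path of P*, and no odd path receives two such edges from C). -/
open SimpleGraph

/-- A cubic graph: every vertex has degree 3. -/
def IsCubic {V : Type*} [Fintype V] (G : SimpleGraph V) : Prop :=
  ∀ v : V, Nat.card (G.neighborSet v) = 3

/-- A circular nowhere-zero `r`-flow: an orientation `dir` of `G` together with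
a flow value `f` on each directed edge, with values in `[1, r-1]` and flow
conservation at every vertex. -/
structure CNZF {V : Type*} [Fintype V] (G : SimpleGraph V) (r : ℝ) where
  dir : V → V → Bool
  f : V → V → ℝ
  orients : ∀ u v, G.Adj u v ↔ (dir u v = true ∨ dir v u = true)
  asymm : ∀ u v, dir u v = true → dir v u = false
  lb : ∀ u v, dir u v = true → 1 ≤ f u v
  ub : ∀ u v, dir u v = true → f u v ≤ r - 1
  conserv : ∀ v : V, (∑ u : V, if dir v u = true then f v u else 0)
      = ∑ u : V, if dir u v = true then f u v else 0

/-- Out-degree of a vertex in an orientation. -/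
noncomputable def outDeg {V : Type*} (dir : V → V → Bool) (v : V) : ℕ :=
  Nat.card {u | dir v u = true}

/-- Every connected component of the subgraph induced by `S` is a tree
on at most `m` vertices. -/
def MonoOK {V : Type*} (G : SimpleGraph V) (m : ℕ) (S : Set V) : Prop :=
  (G.induce S).IsAcyclic ∧
    ∀ c : (G.induce S).ConnectedComponent, Nat.card c.supp ≤ m

/-- A `k`-weak bisection, given by its first part `S`. -/
def IsWeakBisection {V : Type*} [Fintype V] (G : SimpleGraph V) (k : ℕ) (S : Set V) : Prop :=
  Nat.card S = Nat.card (Sᶜ : Set V) ∧ MonoOK G (k-2) S ∧ MonoOK G (k-2) (Sᶜ : Set V)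

/-- Every monochromatic component of the 2-coloring `c` has at most `m` vertices. -/
def MonoAtMost {V : Type*} (G : SimpleGraph V) (c : V → Bool) (m : ℕ) : Prop :=
  ∀ b : Bool, ∀ comp : (G.induce {v | c v = b}).ConnectedComponent,
    Nat.card comp.supp ≤ m

/-- Edges of `L_k` (on vertex labels `0, …, 5+2k`): `L_0` is `K_{3,3}` minus an
edge (parts `{0,1,4}` and `{2,3,5}`, edge `45` removed, degree-2 vertices `4,5`);
at step `j` the two new adjacent vertices `4+2j, 5+2j` are attached to the
previous degree-2 vertices `2+2j, 3+2j`. The degree-2 vertices of `L_k` are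
`4+2k` and `5+2k`. -/
def LEdge (k : ℕ) (a b : ℕ) : Prop :=
  (a, b) ∈ ({(0,2),(0,3),(0,5),(1,2),(1,3),(1,5),(4,2),(4,3)} : Set (ℕ × ℕ)) ∨
  ∃ j, 1 ≤ j ∧ j ≤ k ∧
    ((a, b) = (4+2*j, 5+2*j) ∨ (a, b) = (2+2*j, 4+2*j) ∨ (a, b) = (3+2*j, 5+2*j))

/-- The graph `L_k`. -/
def Lgraph (k : ℕ) : SimpleGraph (Fin (6+2*k)) :=
  SimpleGraph.fromRel (fun a b => LEdge k a.val b.val)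

/-- Edges of `T_k`: one copy of `L'_k` (the copy of `L_k` on `0..5+2k` with apex
`6+2k`), two copies of `L'_0` (on `7+2k..12+2k` with apex `13+2k`, and on
`14+2k..19+2k` with apex `20+2k`), and a central vertex `21+2k` adjacent to the
three apexes. -/
def TEdge (k : ℕ) (a b : ℕ) : Prop :=
  LEdge k a b
  ∨ (a = 6+2*k ∧ (b = 4+2*k ∨ b = 5+2*k))
  ∨ (∃ a' b', LEdge 0 a' b' ∧ a = 7+2*k+a' ∧ b = 7+2*k+b')
  ∨ (a = 13+2*k ∧ (b = 11+2*k ∨ b = 12+2*k))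
  ∨ (∃ a' b', LEdge 0 a' b' ∧ a = 14+2*k+a' ∧ b = 14+2*k+b')
  ∨ (a = 20+2*k ∧ (b = 18+2*k ∨ b = 19+2*k))
  ∨ (a = 21+2*k ∧ (b = 6+2*k ∨ b = 13+2*k ∨ b = 20+2*k))

/-- The cubic graph `T_k`. -/
def Tgraph (k : ℕ) : SimpleGraph (Fin (22+2*k)) :=
  SimpleGraph.fromRel (fun a b => TEdge k a.val b.val)

/-- A valid factor of `G`: a spanning subgraph all of whose components are paths
or cycles (equivalently, all degrees are 1 or 2), such that the two endpoints
(degree-1 vertices) of every odd component are non-adjacent in `G`; in particular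
no component is an isolated vertex. -/
def IsValidFactor {V : Type*} (G H : SimpleGraph V) : Prop :=
  H ≤ G ∧
  (∀ v : V, 1 ≤ Nat.card (H.neighborSet v) ∧ Nat.card (H.neighborSet v) ≤ 2) ∧
  ∀ c : H.ConnectedComponent, Odd (Nat.card c.supp) →
    ∀ u v : V, u ∈ c.supp → v ∈ c.supp → u ≠ v →
      Nat.card (H.neighborSet u) = 1 → Nat.card (H.neighborSet v) = 1 → ¬ G.Adj u v

/-- A component of `H` is a cycle iff all its vertices have degree 2 in `H`. -/
def IsCycleComp {V : Type*} (H : SimpleGraph V) (c : H.ConnectedComponent) : Prop :=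
  ∀ v ∈ c.supp, Nat.card (H.neighborSet v) = 2

/-- An odd cycle component. -/
def OddCycleComp {V : Type*} (H : SimpleGraph V) (c : H.ConnectedComponent) : Prop :=
  Odd (Nat.card c.supp) ∧ IsCycleComp H c

/-- An odd path component (a component with an odd number of vertices containing
a degree-1 vertex). -/
def OddPathComp {V : Type*} (H : SimpleGraph V) (c : H.ConnectedComponent) : Prop :=
  Odd (Nat.card c.supp) ∧ ∃ v ∈ c.supp, Nat.card (H.neighborSet v) = 1

noncomputable def numComponents {V : Type*} (H : SimpleGraph V) : ℕ := Nat.card H.ConnectedComponent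

noncomputable def numOddCycles {V : Type*} (H : SimpleGraph V) : ℕ :=
  Nat.card {c : H.ConnectedComponent // OddCycleComp H c}

/-- `H` is a valid factor of `G` with the minimum number of components. -/
def MinimizesComponents {V : Type*} (G H : SimpleGraph V) : Prop :=
  IsValidFactor G H ∧ ∀ H' : SimpleGraph V, IsValidFactor G H' →
    numComponents H ≤ numComponents H'

/-- `H` is a valid factor of `G` minimizing the number of components and,
subject to that, the number of odd cycles. -/
def IsMinValidFactor {V : Type*} (G H : SimpleGraph V) : Prop :=
  MinimizesComponents G H ∧
  ∀ H' : SimpleGraph V, IsValidFactor G H' →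
    numComponents H' = numComponents H → numOddCycles H ≤ numOddCycles H'

/-- An external vertex of a factor: an endpoint of a path component, or a vertex
of an odd cycle component. -/
def ExternalVtx {V : Type*} (H : SimpleGraph V) (v : V) : Prop :=
  Nat.card (H.neighborSet v) = 1 ∨ OddCycleComp H (H.connectedComponentMk v)


namespace VF

/-- consecutive vertices of a list -/
def padj {V : Type*} (L : List V) (u v : V) : Prop :=
  ∃ i, L[i]? = some u ∧ L[i+1]? = some v

lemma padj_mem_left {V : Type*} {L : List V} {u v : V} (h : padj L u v) : u ∈ L := by
  obtain ⟨i, h1, h2⟩ := h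
  exact List.mem_of_getElem? h1

lemma padj_mem_right {V : Type*} {L : List V} {u v : V} (h : padj L u v) : v ∈ L := by
  obtain ⟨i, h1, h2⟩ := h
  exact List.mem_of_getElem? h2

lemma nodup_idx {V : Type*} {L : List V} (hn : L.Nodup) {i j : ℕ} {u : V}
    (h1 : L[i]? = some u) (h2 : L[j]? = some u) : i = j := by
  obtain ⟨hi, h1⟩ := List.getElem?_eq_some_iff.1 h1
  obtain ⟨hj, h2⟩ := List.getElem?_eq_some_iff.1 h2
  exact (hn.getElem_inj_iff).1 (h1.trans h2.symm)

lemma chain_padj {V : Type*} {R : V → V → Prop} {L : List V} (h : L.IsChain R) {u v : V}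
    (hp : padj L u v) : R u v := by
  obtain ⟨i, h1, h2⟩ := hp
  obtain ⟨hi, h1⟩ := List.getElem?_eq_some_iff.1 h1
  obtain ⟨hj, h2⟩ := List.getElem?_eq_some_iff.1 h2
  subst h1 h2
  exact List.isChain_iff_getElem.1 h i hj

/-- the neighbours of a vertex along a list -/
def pnb {V : Type*} (L : List V) (u : V) : Set V := {v | padj L u v ∨ padj L v u}

lemma pnb_finite {V : Type*} (L : List V) (u : V) : (pnb L u).Finite := by
  refine (L.finite_toSet).subset ?_
  rintro v (h | h)
  · exact padj_mem_right h
  · exact padj_mem_left h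

lemma pnb_pos {V : Type*} {L : List V} (hl : 2 ≤ L.length) {u : V} (hu : u ∈ L) :
    1 ≤ (pnb L u).ncard := by
  rw [Nat.succ_le_iff, Set.ncard_pos (pnb_finite L u)]
  obtain ⟨i, hi, rfl⟩ := List.getElem_of_mem hu
  rcases i with _ | i
  · exact ⟨L[1], Or.inl ⟨0, by simp, by simp⟩⟩
  · exact ⟨L[i], Or.inr ⟨i, by simp, by simp⟩⟩

lemma pnb_le {V : Type*} {L : List V} (hn : L.Nodup) (u : V) :
    (pnb L u).ncard ≤ 2 := by
  by_contra h
  push Not at h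
  rw [Set.two_lt_ncard (pnb_finite L u)] at h
  obtain ⟨a, ha, b, hb, c, hc, h1, h2, h3⟩ := h
  have key : ∀ a b, padj L u a → padj L u b → a = b := by
    rintro a b ⟨i, h1, h2⟩ ⟨j, h3, h4⟩
    have := nodup_idx hn h1 h3
    subst this
    simpa [h2] using h4
  have key2 : ∀ a b, padj L a u → padj L b u → a = b := by
    rintro a b ⟨i, h1, h2⟩ ⟨j, h3, h4⟩
    have := nodup_idx hn h2 h4
    have : i = j := by omega
    subst this
    simpa [h1] using h3
  rcases ha with ha | ha <;> rcases hb with hb | hb <;> rcases hc with hc | hc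
  all_goals
    first
    | exact h1 (key _ _ ha hb) | exact h2 (key _ _ ha hc) | exact h3 (key _ _ hb hc)
    | exact h1 (key2 _ _ ha hb) | exact h2 (key2 _ _ ha hc) | exact h3 (key2 _ _ hb hc)

lemma pnb_head {V : Type*} {L : List V} (hn : L.Nodup) (hl : 2 ≤ L.length) :
    (pnb L (L[0]'(by omega))).ncard = 1 := by
  rw [Set.ncard_eq_one]
  refine ⟨L[1], ?_⟩
  ext v
  simp only [Set.mem_singleton_iff]
  constructor
  · rintro (⟨i, h1, h2⟩ | ⟨i, h1, h2⟩)
    · have : i = 0 := nodup_idx hn h1 (by simp)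
      subst this
      exact (List.getElem?_eq_some_iff.1 h2).2.symm
    · have : i + 1 = 0 := nodup_idx hn h2 (by simp)
      omega
  · rintro rfl
    exact Or.inl ⟨0, by simp, by simp⟩

lemma pnb_one {V : Type*} {L : List V} (hn : L.Nodup) {i : ℕ} (hi : i < L.length)
    (h : (pnb L (L[i])).ncard = 1) : i = 0 ∨ i + 1 = L.length := by
  by_contra hc
  push Not at hc
  obtain ⟨a, ha⟩ := Set.ncard_eq_one.1 h
  obtain ⟨j, rfl⟩ : ∃ j, i = j + 1 := ⟨i - 1, by omega⟩
  have h1 : L[j] ∈ pnb L L[j+1] := Or.inr ⟨j, by simp, by simp⟩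
  have h2 : L[j+2] ∈ pnb L L[j+1] := Or.inl ⟨j+1, by simp, by simp⟩
  rw [ha, Set.mem_singleton_iff] at h1 h2
  have := (hn.getElem_inj_iff).1 (h1.trans h2.symm)
  omega

/-- A path (as a list of vertices) which may be a component of a valid factor. -/
structure Good {V : Type*} (G : SimpleGraph V) (L : List V) : Prop where
  chain : L.IsChain G.Adj
  nodup : L.Nodup
  len : 2 ≤ L.length
  ends : Odd L.length → ∀ a b, L.head? = some a → L.getLast? = some b → ¬ G.Adj a b

/-- the modified factor -/
def modif {V : Type*} (H : SimpleGraph V) (L₁ L₂ : List V)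
    (hcl : ∀ u v, H.Adj u v → (u ∈ L₁ ∨ u ∈ L₂) → (v ∈ L₁ ∨ v ∈ L₂))
    (hn₁ : L₁.Nodup) (hn₂ : L₂.Nodup) : SimpleGraph V where
  Adj u v := (H.Adj u v ∧ ¬ (u ∈ L₁ ∨ u ∈ L₂)) ∨ v ∈ pnb L₁ u ∨ v ∈ pnb L₂ u
  symm := ⟨by
    rintro u v (⟨h1, h2⟩ | h | h)
    · exact Or.inl ⟨h1.symm, fun h => h2 (hcl _ _ h1.symm h)⟩
    · exact Or.inr (Or.inl (Or.symm h))
    · exact Or.inr (Or.inr (Or.symm h))⟩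
  loopless := ⟨by
    have key : ∀ L : List V, L.Nodup → ∀ u, ¬ padj L u u := by
      rintro L hn u ⟨i, h1, h2⟩
      have := nodup_idx hn h1 h2
      omega
    rintro u (⟨h1, h2⟩ | h | h)
    · exact H.loopless.irrefl u h1
    · exact key _ hn₁ u (by rcases h with h | h <;> exact h)
    · exact key _ hn₂ u (by rcases h with h | h <;> exact h)⟩

lemma reach_list {V : Type*} {K : SimpleGraph V} {L : List V} (h : ∀ u v, padj L u v → K.Adj u v)
    {u v : V} (hu : u ∈ L) (hv : v ∈ L) : K.Reachable u v := by
  have key : ∀ i (hi : i < L.length), K.Reachable (L[0]'(by omega)) L[i] := by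
    intro i
    induction i with
    | zero => intro _; exact Reachable.refl _
    | succ i ih =>
      intro hi
      exact (ih (by omega)).trans (h _ _ ⟨i, by simp, by simp⟩).reachable
  obtain ⟨i, hi, rfl⟩ := List.getElem_of_mem hu
  obtain ⟨j, hj, rfl⟩ := List.getElem_of_mem hv
  exact (key i hi).symm.trans (key j hj)

lemma reach_inv {V : Type*} {K : SimpleGraph V} {P : V → Prop} (h : ∀ u v, K.Adj u v → P u → P v)
    {u v : V} (hr : K.Reachable u v) (hu : P u) : P v := by
  obtain ⟨p⟩ := hr
  induction p with
  | nil => exact hu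
  | cons hadj p ih => exact ih (h _ _ hadj hu)

lemma list_card {V : Type*} {L : List V} (hn : L.Nodup) {S : Set V} (h : ∀ v, v ∈ S ↔ v ∈ L) :
    Nat.card S = L.length := by
  classical
  have : S = (L.toFinset : Set V) := by ext v; simp [h]
  rw [this, Nat.card_coe_set_eq, Set.ncard_coe_finset, List.toFinset_card_of_nodup hn]

open Classical in
/-- The replacement lemma. -/
theorem replace {V : Type*} [Fintype V] {G H : SimpleGraph V}
    (hmin : IsMinValidFactor G H) {C D : H.ConnectedComponent} (hC : OddCycleComp H C)
    {L₁ L₂ : List V} (g₁ : Good G L₁) (g₂ : L₂ = [] ∨ Good G L₂)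
    (hdis : ∀ v, v ∈ L₁ → v ∈ L₂ → False)
    (hmem : ∀ v, (v ∈ L₁ ∨ v ∈ L₂) ↔ (H.connectedComponentMk v = C ∨ H.connectedComponentMk v = D))
    (hCD : C = D → L₂ = []) : False := by
  have hn₁ := g₁.nodup
  have hn₂ : L₂.Nodup := by
    rcases g₂ with rfl | g₂
    · simp
    · exact g₂.nodup
  have hcl : ∀ u v, H.Adj u v → (u ∈ L₁ ∨ u ∈ L₂) → (v ∈ L₁ ∨ v ∈ L₂) := by
    intro u v huv
    rw [hmem, hmem, ConnectedComponent.connectedComponentMk_eq_of_adj huv]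
    exact id
  set K := modif H L₁ L₂ hcl hn₁ hn₂ with hK
  have hKadj : ∀ u v, K.Adj u v ↔
      (H.Adj u v ∧ ¬ (u ∈ L₁ ∨ u ∈ L₂)) ∨ v ∈ pnb L₁ u ∨ v ∈ pnb L₂ u := fun u v => Iff.rfl
  have pm : ∀ (L : List V) u v, v ∈ pnb L u → u ∈ L ∧ v ∈ L := by
    rintro L u v (h | h)
    · exact ⟨padj_mem_left h, padj_mem_right h⟩
    · exact ⟨padj_mem_right h, padj_mem_left h⟩
  have hN1 : ∀ u ∈ L₁, K.neighborSet u = pnb L₁ u := by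
    intro u hu
    ext v
    rw [mem_neighborSet, hKadj]
    constructor
    · rintro (h | h | h)
      · exact absurd (Or.inl hu) h.2
      · exact h
      · exact (hdis u hu (pm _ _ _ h).1).elim
    · intro h; exact Or.inr (Or.inl h)
  have hN2 : ∀ u ∈ L₂, K.neighborSet u = pnb L₂ u := by
    intro u hu
    ext v
    rw [mem_neighborSet, hKadj]
    constructor
    · rintro (h | h | h)
      · exact absurd (Or.inr hu) h.2
      · exact (hdis u (pm _ _ _ h).1 hu).elim
      · exact h
    · intro h; exact Or.inr (Or.inr h)
  have hN0 : ∀ u, ¬ (u ∈ L₁ ∨ u ∈ L₂) → K.neighborSet u = H.neighborSet u := by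
    intro u hu
    ext v
    rw [mem_neighborSet, hKadj, mem_neighborSet]
    constructor
    · rintro (h | h | h)
      · exact h.1
      · exact absurd (Or.inl (pm _ _ _ h).1) hu
      · exact absurd (Or.inr (pm _ _ _ h).1) hu
    · intro h; exact Or.inl ⟨h, hu⟩
  -- reachability
  have hinv1 : ∀ u v, K.Reachable u v → u ∈ L₁ → v ∈ L₁ := by
    intro u v hr
    refine reach_inv (P := fun v => v ∈ L₁) ?_ hr
    intro a b hab ha
    have : b ∈ K.neighborSet a := hab
    rw [hN1 a ha] at this
    exact (pm _ _ _ this).2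
  have hinv2 : ∀ u v, K.Reachable u v → u ∈ L₂ → v ∈ L₂ := by
    intro u v hr
    refine reach_inv (P := fun v => v ∈ L₂) ?_ hr
    intro a b hab ha
    have : b ∈ K.neighborSet a := hab
    rw [hN2 a ha] at this
    exact (pm _ _ _ this).2
  have hinv0 : ∀ u v, K.Reachable u v → ¬ (u ∈ L₁ ∨ u ∈ L₂) →
      (¬ (v ∈ L₁ ∨ v ∈ L₂)) ∧ H.Reachable u v := by
    intro u v hr hu
    refine reach_inv (P := fun v => (¬ (v ∈ L₁ ∨ v ∈ L₂)) ∧ H.Reachable u v) ?_ hr ⟨hu, .refl _⟩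
    intro a b hab ha
    have : b ∈ K.neighborSet a := hab
    rw [hN0 a ha.1] at this
    exact ⟨fun h => ha.1 (hcl _ _ (H.adj_symm this) h), ha.2.trans this.reachable⟩
  have hinv0' : ∀ u v, H.Reachable u v → ¬ (u ∈ L₁ ∨ u ∈ L₂) → K.Reachable u v := by
    intro u v hr hu
    refine (reach_inv (P := fun v => (¬ (v ∈ L₁ ∨ v ∈ L₂)) ∧ K.Reachable u v) ?_ hr
      ⟨hu, .refl _⟩).2
    intro a b hab ha
    have : b ∈ H.neighborSet a := hab
    rw [← hN0 a ha.1] at this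
    exact ⟨fun h => ha.1 (hcl _ _ hab.symm h), ha.2.trans this.reachable⟩
  have hr1 : ∀ u v, u ∈ L₁ → v ∈ L₁ → K.Reachable u v := by
    intro u v hu hv
    exact reach_list (fun a b h => Or.inr (Or.inl (Or.inl h))) hu hv
  have hr2 : ∀ u v, u ∈ L₂ → v ∈ L₂ → K.Reachable u v := by
    intro u v hu hv
    exact reach_list (fun a b h => Or.inr (Or.inr (Or.inl h))) hu hv
  -- supports
  have hs1 : ∀ u ∈ L₁, Nat.card (K.connectedComponentMk u).supp = L₁.length := by
    intro u hu
    refine list_card hn₁ fun v => ?_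
    rw [ConnectedComponent.mem_supp_iff, ConnectedComponent.eq]
    exact ⟨fun h => hinv1 _ _ h.symm hu, fun h => hr1 _ _ h hu⟩
  have hs2 : ∀ u ∈ L₂, Nat.card (K.connectedComponentMk u).supp = L₂.length := by
    intro u hu
    refine list_card hn₂ fun v => ?_
    rw [ConnectedComponent.mem_supp_iff, ConnectedComponent.eq]
    exact ⟨fun h => hinv2 _ _ h.symm hu, fun h => hr2 _ _ h hu⟩
  have hs0 : ∀ u, ¬ (u ∈ L₁ ∨ u ∈ L₂) →
      (K.connectedComponentMk u).supp = (H.connectedComponentMk u).supp := by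
    intro u hu
    ext v
    rw [ConnectedComponent.mem_supp_iff, ConnectedComponent.eq,
      ConnectedComponent.mem_supp_iff, ConnectedComponent.eq]
    exact ⟨fun h => (hinv0 _ _ h.symm hu).2.symm, fun h => (hinv0' _ _ h.symm hu).symm⟩
  obtain ⟨⟨⟨hHG, hdeg, hodd⟩, hmin1⟩, hmin2⟩ := hmin
  have ends : ∀ L : List V, Good G L → Odd L.length → ∀ u v, u ∈ L → v ∈ L → u ≠ v →
      (pnb L u).ncard = 1 → (pnb L v).ncard = 1 → ¬ G.Adj u v := by
    intro L g ho u v hu hv huv h1 h2 hadj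
    obtain ⟨i, hi, rfl⟩ := List.getElem_of_mem hu
    obtain ⟨j, hj, rfl⟩ := List.getElem_of_mem hv
    have hij : i ≠ j := by rintro rfl; exact huv rfl
    have hlen := g.len
    have hh : L.head? = some (L[0]'(by omega)) := by
      rw [List.head?_eq_getElem?]; simp
    have ht : L.getLast? = some (L[L.length - 1]'(by omega)) := by
      rw [List.getLast?_eq_getElem?]; simp
    have := g.ends ho _ _ hh ht
    rcases pnb_one g.nodup hi h1 with h3 | h3 <;> rcases pnb_one g.nodup hj h2 with h4 | h4
    · omega
    · subst h3
      have : j = L.length - 1 := by omega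
      subst this
      contradiction
    · subst h4
      have : i = L.length - 1 := by omega
      subst this
      exact absurd hadj.symm ‹_›
    · omega
  -- validity
  have hval : IsValidFactor G K := by
    refine ⟨?_, ?_, ?_⟩
    · intro u v huv
      have ch : ∀ L : List V, L.IsChain G.Adj → v ∈ pnb L u → G.Adj u v := by
        rintro L hL (h | h)
        · exact chain_padj hL h
        · exact (chain_padj hL h).symm
      rcases (hKadj u v).1 huv with h | h | h
      · exact hHG h.1
      · exact ch _ g₁.chain h
      · rcases g₂ with rfl | g₂
        · exact ch _ (by simp) h
        · exact ch _ g₂.chain h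
    · intro v
      by_cases h1 : v ∈ L₁
      · rw [hN1 v h1]
        exact ⟨pnb_pos g₁.len h1, pnb_le hn₁ v⟩
      by_cases h2 : v ∈ L₂
      · rw [hN2 v h2]
        rcases g₂ with rfl | g₂
        · simp at h2
        · exact ⟨pnb_pos g₂.len h2, pnb_le hn₂ v⟩
      · rw [hN0 v (by tauto)]
        exact hdeg v
    · intro c ho u v hu hv huv hdu hdv
      rw [ConnectedComponent.mem_supp_iff] at hu hv
      subst hu
      have hr : K.Reachable v u := ConnectedComponent.eq.1 hv
      by_cases h1 : u ∈ L₁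
      · have h1' := hinv1 _ _ hr.symm h1
        rw [hN1 _ h1] at hdu
        rw [hN1 _ h1'] at hdv
        rw [hs1 _ h1] at ho
        exact ends _ g₁ ho u v h1 h1' huv hdu hdv
      by_cases h2 : u ∈ L₂
      · have h2' := hinv2 _ _ hr.symm h2
        rw [hN2 _ h2] at hdu
        rw [hN2 _ h2'] at hdv
        rw [hs2 _ h2] at ho
        rcases g₂ with rfl | g₂
        · simp at h2
        exact ends _ g₂ ho u v h2 h2' huv hdu hdv
      · have h0 : ¬ (u ∈ L₁ ∨ u ∈ L₂) := by tauto
        have h0' := hinv0 _ _ hr.symm h0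
        rw [hs0 _ h0] at ho
        rw [hN0 _ h0] at hdu
        rw [hN0 _ h0'.1] at hdv
        refine hodd _ ho u v rfl ?_ huv hdu hdv
        exact ConnectedComponent.eq.2 h0'.2.symm
  let φ : V → H.ConnectedComponent := fun v =>
    if v ∈ L₁ then D else if v ∈ L₂ then C else H.connectedComponentMk v
  have hφ : ∀ u v, K.Reachable u v → φ u = φ v := by
    intro u v hr
    by_cases h1 : u ∈ L₁
    · have := hinv1 _ _ hr h1
      simp [φ, h1, this]
    by_cases h2 : u ∈ L₂
    · have := hinv2 _ _ hr h2
      have h3 : v ∉ L₁ := fun h => hdis _ h this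
      simp [φ, h1, h2, h3, this]
    · have := hinv0 _ _ hr (by tauto)
      have h3 : v ∉ L₁ := fun h => this.1 (Or.inl h)
      have h4 : v ∉ L₂ := fun h => this.1 (Or.inr h)
      simp only [φ, h1, h2, h3, h4, if_false]
      exact ConnectedComponent.eq.2 this.2
  have hφ' : ∀ u v, φ u = φ v → K.Reachable u v := by
    intro u v he
    by_cases h1 : u ∈ L₁ <;> by_cases h1' : v ∈ L₁
    · exact hr1 _ _ h1 h1'
    · by_cases h2' : v ∈ L₂
      · simp only [φ, h1, h1', h2', if_true, if_false] at he
        rw [hCD he.symm] at h2'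
        simp at h2'
      · simp only [φ, h1, h1', h2', if_true, if_false] at he
        have := (hmem v).2 (Or.inr he.symm)
        tauto
    · by_cases h2 : u ∈ L₂
      · simp only [φ, h1, h1', h2, if_true, if_false] at he
        rw [hCD he] at h2
        simp at h2
      · simp only [φ, h1, h1', h2, if_true, if_false] at he
        have := (hmem u).2 (Or.inr he)
        tauto
    · by_cases h2 : u ∈ L₂ <;> by_cases h2' : v ∈ L₂
      · exact hr2 _ _ h2 h2'
      · simp only [φ, h1, h1', h2, h2', if_true, if_false] at he
        have := (hmem v).2 (Or.inl he.symm)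
        tauto
      · simp only [φ, h1, h1', h2, h2', if_true, if_false] at he
        have := (hmem u).2 (Or.inl he)
        tauto
      · simp only [φ, h1, h1', h2, h2', if_false] at he
        exact hinv0' _ _ (ConnectedComponent.eq.1 he) (by tauto)
  let f : K.ConnectedComponent → H.ConnectedComponent :=
    ConnectedComponent.lift φ (fun u v p _ => hφ u v p.reachable)
  have hf : Function.Injective f := by
    intro c d
    induction c using ConnectedComponent.ind with | _ u
    induction d using ConnectedComponent.ind with | _ v
    intro h
    exact ConnectedComponent.eq.2 (hφ' u v h)
  have hnum : numComponents K = numComponents H :=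
    le_antisymm (Nat.card_le_card_of_injective f hf) (hmin1 K hval)
  have hnum2 := hmin2 K hval hnum
  have hodd2 : ∀ c, OddCycleComp K c → OddCycleComp H (f c) ∧ f c ≠ C := by
    intro c
    induction c using ConnectedComponent.ind with | _ u
    rintro ⟨ho, hc⟩
    have hend : ∀ L : List V, Good G L → u ∈ L → (∀ v ∈ L, K.neighborSet v = pnb L v) →
        (∀ v ∈ L, K.Reachable v u) → False := by
      intro L g hu hN hr
      have hlen := g.len
      have hm : L[0]'(by omega) ∈ L := List.getElem_mem _
      have := hc (L[0]'(by omega)) (ConnectedComponent.eq.2 (hr _ hm))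
      rw [hN _ hm, Nat.card_coe_set_eq, pnb_head g.nodup g.len] at this
      omega
    by_cases h1 : u ∈ L₁
    · exact (hend L₁ g₁ h1 hN1 (fun v hv => hr1 _ _ hv h1)).elim
    by_cases h2 : u ∈ L₂
    · rcases g₂ with rfl | g₂
      · simp at h2
      · exact (hend L₂ g₂ h2 hN2 (fun v hv => hr2 _ _ hv h2)).elim
    have h0 : ¬ (u ∈ L₁ ∨ u ∈ L₂) := by tauto
    have hfu : f (K.connectedComponentMk u) = H.connectedComponentMk u := by
      change φ u = _
      simp [φ, h1, h2]
    rw [hfu]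
    refine ⟨⟨?_, ?_⟩, ?_⟩
    · rw [← hs0 u h0]; exact ho
    · intro v hv
      rw [← hs0 u h0] at hv
      have h0' := (hinv0 _ _ (ConnectedComponent.eq.1 hv).symm h0).1
      rw [← hN0 v h0']
      exact hc v hv
    · intro h
      exact h0 ((hmem u).2 (Or.inl h))
  let F : {c : K.ConnectedComponent // OddCycleComp K c} →
      {c : H.ConnectedComponent // OddCycleComp H c} := fun c => ⟨f c.1, (hodd2 c.1 c.2).1⟩
  have hF : Function.Injective F := by
    intro a b h
    exact Subtype.ext (hf (congrArg Subtype.val h))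
  have hbij : Function.Bijective F := by
    rw [Nat.bijective_iff_injective_and_card]
    refine ⟨hF, le_antisymm (Nat.card_le_card_of_injective F hF) hnum2⟩
  obtain ⟨c, hc⟩ := hbij.2 ⟨C, hC⟩
  exact (hodd2 c.1 c.2).2 (congrArg Subtype.val hc)

/-- hands-on degree bound -/
def D2 {V : Type*} (H : SimpleGraph V) : Prop :=
  ∀ v a b c, H.Adj v a → H.Adj v b → H.Adj v c → a = b ∨ a = c ∨ b = c

lemma path_idx {V : Type*} {H : SimpleGraph V} (h2 : D2 H) {L : List V} (hn : L.Nodup)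
    (hc : L.IsChain H.Adj) {a : V} (ha : L.head? = some a)
    (h1 : ∀ u v, H.Adj a u → H.Adj a v → u = v) {i j : ℕ} (hij : i < j) (hj : j < L.length)
    (hadj : H.Adj (L[i]'(by omega)) L[j]) : j = i + 1 := by
  have hch := List.isChain_iff_getElem.1 hc
  rcases i with _ | i
  · have h0 : L[0]'(by omega) = a := by
      rw [List.head?_eq_getElem?] at ha
      exact (List.getElem?_eq_some_iff.1 ha).2
    have := hch 0 (by omega)
    rw [h0] at this hadj
    exact (hn.getElem_inj_iff).1 (h1 _ _ hadj this)
  · have e1 := (hch i (by omega)).symm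
    have e2 := hch (i+1) (by omega)
    rcases h2 _ _ _ _ e1 e2 hadj with h | h | h
    · have := (hn.getElem_inj_iff).1 h; omega
    · have := (hn.getElem_inj_iff).1 h; omega
    · have := (hn.getElem_inj_iff).1 h; omega

/-- A path component as a list. -/
lemma path_list {V : Type*} [Fintype V] {H : SimpleGraph V} (h2 : D2 H) {a : V}
    (h1 : ∀ u v, H.Adj a u → H.Adj a v → u = v) :
    ∃ L : List V, L.Nodup ∧ L.IsChain H.Adj ∧ L.head? = some a ∧
      (∀ u v, H.Adj u v → u ∈ L → v ∈ L) := by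
  classical
  by_contra hno
  push Not at hno
  have key : ∀ n : ℕ, ∃ L : List V, L.Nodup ∧ L.IsChain H.Adj ∧ L.head? = some a ∧
      L.length = n + 1 := by
    intro n
    induction n with
    | zero => exact ⟨[a], by simp, by simp, by simp, by simp⟩
    | succ n ih =>
      obtain ⟨L, hn, hc, ha, hl⟩ := ih
      obtain ⟨u, v, huv, hu, hv⟩ := hno L hn hc ha
      have hch := List.isChain_iff_getElem.1 hc
      obtain ⟨i, hi, rfl⟩ := List.getElem_of_mem hu
      have hlast : i + 1 = L.length := by
        by_contra hne
        have e2 := hch i (by omega)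
        rcases i with _ | i
        · have h0 : L[0]'(by omega) = a := by
            rw [List.head?_eq_getElem?] at ha
            exact (List.getElem?_eq_some_iff.1 ha).2
          rw [h0] at huv e2
          apply hv
          rw [h1 _ _ huv e2]
          exact List.getElem_mem _
        · have e1 := (hch i (by omega)).symm
          rcases h2 _ _ _ _ e1 e2 huv with h | h | h
          · have := (hn.getElem_inj_iff).1 h; omega
          · exact hv (h ▸ List.getElem_mem _)
          · exact hv (h ▸ List.getElem_mem _)
      refine ⟨L ++ [v], ?_, ?_, ?_, by simp [hl]⟩
      · rw [List.nodup_append]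
        refine ⟨hn, by simp, ?_⟩
        intro x hx y hy
        simp only [List.mem_singleton] at hy
        subst hy
        rintro rfl
        exact hv hx
      · refine hc.append (by simp) ?_
        intro x hx y hy
        simp only [List.head?_cons, Option.mem_def, Option.some.injEq] at hy
        subst hy
        rw [List.getLast?_eq_getElem?, Option.mem_def] at hx
        have := (List.getElem?_eq_some_iff.1 hx).2
        have hi' : i = L.length - 1 := by omega
        subst hi'
        rw [← this]
        exact huv
      · simp [ha]
  obtain ⟨L, hn, -, -, hl⟩ := key (Fintype.card V)
  have := hn.length_le_card
  omega

lemma mem_iff_comp {V : Type*} {H : SimpleGraph V} {L : List V} (hc : L.IsChain H.Adj)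
    (hcl : ∀ u v, H.Adj u v → u ∈ L → v ∈ L) {a : V} (ha : a ∈ L) (v : V) :
    v ∈ L ↔ H.connectedComponentMk v = H.connectedComponentMk a := by
  rw [ConnectedComponent.eq]
  constructor
  · intro hv
    exact reach_list (fun _ _ h => chain_padj hc h) hv ha
  · intro h
    exact reach_inv (P := fun v => v ∈ L) hcl h.symm ha

/-- A cycle component as a list, cut at a given edge. -/
lemma cycle_list {V : Type*} [Fintype V] {H : SimpleGraph V} (h2 : D2 H) {x x' : V}
    (hx : H.Adj x x')
    (hcyc : ∀ v, H.connectedComponentMk v = H.connectedComponentMk x →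
      ∃ a b, a ≠ b ∧ H.Adj v a ∧ H.Adj v b) :
    ∃ L : List V, L.Nodup ∧ L.IsChain H.Adj ∧ L.head? = some x ∧ L.getLast? = some x' ∧
      (∀ v, v ∈ L ↔ H.connectedComponentMk v = H.connectedComponentMk x) := by
  classical
  let K := H.deleteEdges {s(x, x')}
  have hK : ∀ u v, K.Adj u v ↔ H.Adj u v ∧ ¬ (u = x ∧ v = x' ∨ u = x' ∧ v = x) := by
    intro u v
    simp [K, deleteEdges_adj]
  have hne := hx.ne
  have d1 : ∀ u v, K.Adj x u → K.Adj x v → u = v := by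
    intro u v hu hv
    rw [hK] at hu hv
    rcases h2 _ _ _ _ hx hu.1 hv.1 with h | h | h
    · exact absurd (Or.inl ⟨rfl, h.symm⟩) hu.2
    · exact absurd (Or.inl ⟨rfl, h.symm⟩) hv.2
    · exact h
  have d1' : ∀ u v, K.Adj x' u → K.Adj x' v → u = v := by
    intro u v hu hv
    rw [hK] at hu hv
    rcases h2 _ _ _ _ hx.symm hu.1 hv.1 with h | h | h
    · exact absurd (Or.inr ⟨rfl, h.symm⟩) hu.2
    · exact absurd (Or.inr ⟨rfl, h.symm⟩) hv.2
    · exact h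
  have h2K : D2 K := fun v a b c ha hb hc =>
    h2 v a b c ((hK _ _).1 ha).1 ((hK _ _).1 hb).1 ((hK _ _).1 hc).1
  obtain ⟨L, hn, hc, ha, hcl⟩ := path_list h2K d1
  have hcH : L.IsChain H.Adj := hc.imp (fun a b h => ((hK _ _).1 h).1)
  have hxL : x ∈ L := List.mem_of_mem_head? ha
  have hL : 0 < L.length := List.length_pos_of_mem hxL
  have hch := List.isChain_iff_getElem.1 hc
  -- the last vertex
  have hreach : ∀ v ∈ L, H.connectedComponentMk v = H.connectedComponentMk x := by
    intro v hv
    rw [ConnectedComponent.eq]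
    exact reach_list (fun _ _ h => chain_padj hcH h) hv hxL
  have hlast : L[L.length - 1] = x' := by
    by_contra hl
    obtain ⟨a, b, hab, hla, hlb⟩ := hcyc _ (hreach L[L.length - 1] (List.getElem_mem _))
    by_cases h1 : L.length = 1
    · have h0 : L[L.length - 1] = x := by
        rw [List.head?_eq_getElem?] at ha
        simp only [h1]
        exact (List.getElem?_eq_some_iff.1 ha).2
      rw [h0] at hla hlb
      have : ∃ u, u ≠ x' ∧ H.Adj x u := by
        by_cases h : a = x'
        · exact ⟨b, fun h' => hab (h.trans h'.symm), hlb⟩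
        · exact ⟨a, h, hla⟩
      obtain ⟨u, hu, hxu⟩ := this
      have hu' : K.Adj x u := (hK _ _).2 ⟨hxu, by
        rintro (⟨_, h⟩ | ⟨h, _⟩)
        · exact hu h
        · exact hne h⟩
      have := hcl _ _ hu' hxL
      obtain ⟨w, rfl⟩ := List.length_eq_one_iff.1 h1
      simp only [List.mem_singleton] at this hxL
      exact hxu.ne (hxL.trans this.symm)
    · have hlx : L[L.length - 1] ≠ x := by
        intro h
        rw [List.head?_eq_getElem?] at ha
        have h0 := (List.getElem?_eq_some_iff.1 ha).2
        have := (hn.getElem_inj_iff).1 (h.trans h0.symm)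
        omega
      have hnb : ∀ u, H.Adj L[L.length - 1] u → u = L[L.length - 1 - 1] := by
        intro u hu
        have hu' : K.Adj L[L.length - 1] u := (hK _ _).2 ⟨hu, by
          rintro (⟨h, _⟩ | ⟨h, _⟩)
          · exact hlx h
          · exact hl h⟩
        have hm := hcl _ _ hu' (List.getElem_mem _)
        obtain ⟨i, hi, rfl⟩ := List.getElem_of_mem hm
        have hi2 : i ≠ L.length - 1 := by
          rintro rfl
          exact hu.ne rfl
        have := path_idx h2K hn hc ha d1 (i := i) (j := L.length - 1) (by omega) (by omega) hu'.symm
        congr 1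
        omega
      exact hab ((hnb a hla).trans (hnb b hlb).symm)
  have hclH : ∀ u v, H.Adj u v → u ∈ L → v ∈ L := by
    intro u v huv hu
    by_cases h : u = x ∧ v = x' ∨ u = x' ∧ v = x
    · rcases h with ⟨_, h⟩ | ⟨_, h⟩
      · rw [h, ← hlast]; exact List.getElem_mem _
      · rw [h]; exact hxL
    · exact hcl _ _ ((hK _ _).2 ⟨huv, h⟩) hu
  refine ⟨L, hn, hcH, ha, ?_, mem_iff_comp hcH hclH hxL⟩
  rw [List.getLast?_eq_getElem?, ← hlast]
  simp

/-- The standing assumptions. -/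
structure Ctx {V : Type*} (G H : SimpleGraph V) (C : H.ConnectedComponent) : Prop where
  hmin : IsMinValidFactor G H
  hC : OddCycleComp H C
  le : H ≤ G
  d2 : D2 H
  g3 : ∀ v a b c d, G.Adj v a → G.Adj v b → G.Adj v c → G.Adj v d →
    a ≠ b → a ≠ c → a ≠ d → b ≠ c → b ≠ d → c ≠ d → False
  two : ∀ v, H.connectedComponentMk v = C → ∃ a b, a ≠ b ∧ H.Adj v a ∧ H.Adj v b

/-- A Hamiltonian path (as list) of the vertex set of a component. -/
structure Span {V : Type*} (G H : SimpleGraph V) (D : H.ConnectedComponent) (L : List V) :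
    Prop where
  nodup : L.Nodup
  chain : L.IsChain G.Adj
  mem : ∀ v, v ∈ L ↔ H.connectedComponentMk v = D

lemma Span.card {V : Type*} {G H : SimpleGraph V} {D : H.ConnectedComponent} {L : List V}
    (h : Span G H D L) : Nat.card D.supp = L.length :=
  list_card h.nodup fun v => by rw [h.mem, ConnectedComponent.mem_supp_iff]

lemma chain_rev {V : Type*} {G : SimpleGraph V} {L : List V} (h : L.IsChain G.Adj) :
    L.reverse.IsChain G.Adj := by
  rw [List.isChain_reverse]
  exact h.imp (fun _ _ h => h.symm)

lemma Span.rev {V : Type*} {G H : SimpleGraph V} {D : H.ConnectedComponent} {L : List V}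
    (h : Span G H D L) : Span G H D L.reverse :=
  ⟨List.nodup_reverse.2 h.nodup, chain_rev h.chain, fun v => by rw [List.mem_reverse, h.mem]⟩

lemma Ctx.clist {V : Type*} [Fintype V] {G H : SimpleGraph V} {C : H.ConnectedComponent}
    (ctx : Ctx G H C) {x x' : V} (hx : H.connectedComponentMk x = C) (hxx : H.Adj x x') :
    ∃ L : List V, Span G H C L ∧ L.IsChain H.Adj ∧ L.head? = some x ∧ L.getLast? = some x' ∧
      Odd L.length := by
  obtain ⟨L, hn, hc, h1, h2, hm⟩ := cycle_list ctx.d2 hxx (fun v hv => ctx.two v (hv.trans hx))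
  have hS : Span G H C L := ⟨hn, hc.imp (fun _ _ h => ctx.le h), fun v => by rw [hm, hx]⟩
  refine ⟨L, hS, hc, h1, h2, ?_⟩
  rw [← hS.card]
  exact ctx.hC.1

lemma good_even {V : Type*} {G : SimpleGraph V} {L : List V} (hc : L.IsChain G.Adj)
    (hn : L.Nodup) (he : Even L.length) : L = [] ∨ Good G L := by
  rcases L.eq_nil_or_concat' with h | ⟨L', b, h⟩
  · exact Or.inl h
  · right
    refine ⟨hc, hn, ?_, fun ho => absurd ho (Nat.not_odd_iff_even.2 he)⟩
    have : L.length ≠ 0 := by subst h; simp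
    obtain ⟨k, hk⟩ := he
    omega

lemma Ctx.attach {V : Type*} [Fintype V] {G H : SimpleGraph V} {C : H.ConnectedComponent}
    (ctx : Ctx G H C) {D : H.ConnectedComponent} (hD : D ≠ C) {Q₁ Q₂ : List V}
    (hn : (Q₁ ++ Q₂).Nodup) (hm : ∀ v, v ∈ Q₁ ++ Q₂ ↔ H.connectedComponentMk v = D)
    (hc : Q₁.IsChain G.Adj) {x y x' : V} (hy : Q₁.getLast? = some y) (hxy : G.Adj x y)
    (hx : H.connectedComponentMk x = C) (hxx : H.Adj x x')
    (he : Even Q₁.length → ∀ p, Q₁.head? = some p → ¬ G.Adj p x')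
    (g₂ : Q₂ = [] ∨ Good G Q₂) : False := by
  obtain ⟨L, hS, -, hh, hl, ho⟩ := ctx.clist hx hxx
  have hdisj : ∀ v, v ∈ Q₁ ++ Q₂ → v ∈ L → False := by
    intro v h1 h2
    rw [hm] at h1
    rw [hS.mem] at h2
    exact hD (h1.symm.trans h2)
  have hQ0 : Q₁ ≠ [] := by rintro rfl; simp at hy
  have hL0 : L ≠ [] := by rintro rfl; simp at hh
  rw [List.nodup_append] at hn
  refine replace (D := D) (L₁ := Q₁ ++ L) (L₂ := Q₂) ctx.hmin ctx.hC ⟨?_, ?_, ?_, ?_⟩ g₂ ?_ ?_ ?_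
  · refine hc.append hS.chain ?_
    intro a ha b hb
    rw [hy] at ha
    rw [hh] at hb
    simp only [Option.mem_def, Option.some.injEq] at ha hb
    subst ha hb
    exact hxy.symm
  · rw [List.nodup_append]
    refine ⟨hn.1, hS.nodup, ?_⟩
    rintro a ha b hb rfl
    exact hdisj a (List.mem_append_left _ ha) hb
  · have := List.length_pos_of_ne_nil hQ0
    have := List.length_pos_of_ne_nil hL0
    rw [List.length_append]
    omega
  · intro hodd a b ha hb
    rw [List.head?_append_of_ne_nil _ hQ0] at ha
    rw [List.getLast?_append_of_ne_nil _ hL0, hl] at hb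
    simp only [Option.some.injEq] at hb
    subst hb
    refine he ?_ a ha
    rw [List.length_append] at hodd
    by_contra h
    rw [Nat.not_even_iff_odd] at h
    exact (Nat.not_odd_iff_even.2 (h.add_odd ho)) hodd
  · intro v h1 h2
    rcases List.mem_append.1 h1 with h | h
    · exact hn.2.2 v h v h2 rfl
    · exact hdisj v (List.mem_append_right _ h2) h
  · intro v
    rw [List.mem_append, hS.mem, ← hm, List.mem_append]
    tauto
  · intro h
    exact absurd h.symm hD

lemma Ctx.nbr {V : Type*} {G H : SimpleGraph V} {C : H.ConnectedComponent}
    (ctx : Ctx G H C) {x : V} (hx : H.connectedComponentMk x = C) : ∃ x', H.Adj x x' := by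
  obtain ⟨a, b, -, h, -⟩ := ctx.two x hx
  exact ⟨a, h⟩

lemma Ctx.nbrC {V : Type*} {G H : SimpleGraph V} {C : H.ConnectedComponent}
    {x x' : V} (hx : H.connectedComponentMk x = C) (h : H.Adj x x') :
    H.connectedComponentMk x' = C := by
  rw [← hx, ConnectedComponent.connectedComponentMk_eq_of_adj h]

/-- Splitting into two even paths. -/
lemma Ctx.S {V : Type*} [Fintype V] {G H : SimpleGraph V} {C : H.ConnectedComponent}
    (ctx : Ctx G H C) {D : H.ConnectedComponent} (hD : D ≠ C) {A B : List V} {x y : V}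
    (hS : Span G H D (A ++ y :: B)) (hA : Even A.length) (hB : Even B.length)
    (hx : H.connectedComponentMk x = C) (hxy : G.Adj x y) : False := by
  obtain ⟨x', hxx⟩ := ctx.nbr hx
  have e : A ++ y :: B = (A ++ [y]) ++ B := by simp
  rw [e] at hS
  refine ctx.attach hD hS.nodup hS.mem hS.chain.left_of_append (y := y) (by simp) hxy hx hxx ?_
    (good_even hS.chain.right_of_append hS.nodup.of_append_right hB)
  intro h
  rw [List.length_append, List.length_singleton] at h
  exact absurd h (Nat.not_even_iff_odd.2 hA.add_one)

/-- No edge from `C` to an end of an even path. -/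
lemma Ctx.E {V : Type*} [Fintype V] {G H : SimpleGraph V} {C : H.ConnectedComponent}
    (ctx : Ctx G H C) {D : H.ConnectedComponent} (hD : D ≠ C) {L : List V} {x y : V}
    (hS : Span G H D L) (hL : Even L.length) (hy : L.getLast? = some y)
    (hx : H.connectedComponentMk x = C) (hxy : G.Adj x y) : False := by
  have step : ∀ (L : List V), Span G H D L → Even L.length → ∀ q y, L.getLast? = some y →
      L.head? = some q → ∀ x x', H.connectedComponentMk x = C → G.Adj x y → H.Adj x x' →
      G.Adj x' q := by
    intro L hS hL q y hy hq x x' hx hxy hxx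
    by_contra hno
    refine ctx.attach hD (Q₁ := L) (Q₂ := []) (by simpa using hS.nodup) (by simpa using hS.mem)
      hS.chain hy hxy hx hxx ?_ (Or.inl rfl)
    intro _ p hp h
    rw [hq] at hp
    simp only [Option.some.injEq] at hp
    subst hp
    exact hno h.symm
  have hL0 : L ≠ [] := by rintro rfl; simp at hy
  obtain ⟨q, hq⟩ : ∃ q, L.head? = some q := ⟨L.head hL0, List.head?_eq_some_head hL0⟩
  have s1 := step L hS hL q y hy hq
  have s2 := step L.reverse hS.rev (by simpa using hL) y q (by simpa using hq) (by simpa using hy)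
  obtain ⟨x', hxx⟩ := ctx.nbr hx
  obtain ⟨P, hP, hPc, hPh, hPl, hPo⟩ := ctx.clist hx hxx
  have hch := List.isChain_iff_getElem.1 hPc
  have hP0 : 0 < P.length := hPo.pos
  have key : ∀ i (hi : i < P.length), (Even i → G.Adj P[i] y) ∧ (Odd i → G.Adj P[i] q) := by
    intro i
    induction i with
    | zero =>
      intro hi
      refine ⟨fun _ => ?_, fun h => absurd h (by decide)⟩
      rw [List.head?_eq_getElem?] at hPh
      rw [(List.getElem?_eq_some_iff.1 hPh).2]
      exact hxy
    | succ i ih =>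
      intro hi
      have hm := (hP.mem P[i]).1 (List.getElem_mem _)
      obtain ⟨h1, h2⟩ := ih (by omega)
      constructor
      · intro h
        have : Odd i := by
          rw [Nat.even_add_one, Nat.not_even_iff_odd] at h; exact h
        exact s2 _ _ hm (h2 this) (hch i hi)
      · intro h
        have : Even i := by
          rw [Nat.odd_add_one, Nat.not_odd_iff_even] at h; exact h
        exact s1 _ _ hm (h1 this) (hch i hi)
  have hlast : G.Adj x' y := by
    have := (key (P.length - 1) (by omega)).1 (Nat.Odd.sub_odd hPo odd_one)
    rw [List.getLast?_eq_getElem?] at hPl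
    rwa [(List.getElem?_eq_some_iff.1 hPl).2] at this
  have hxq : G.Adj x q := s1 x' x (Ctx.nbrC (G := G) hx hxx) hlast hxx.symm
  obtain ⟨a, b, hab, ha, hb⟩ := ctx.two x hx
  have hyD : H.connectedComponentMk y = D := (hS.mem y).1 (List.mem_of_mem_getLast? hy)
  have hqD : H.connectedComponentMk q = D := (hS.mem q).1 (List.mem_of_mem_head? hq)
  have haC := Ctx.nbrC (G := G) hx ha
  have hbC := Ctx.nbrC (G := G) hx hb
  have hne : ∀ u v, H.connectedComponentMk u = C → H.connectedComponentMk v = D → u ≠ v := by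
    rintro u v h1 h2 rfl
    exact hD (h2.symm.trans h1)
  have hyq : y ≠ q := by
    rintro rfl
    have hlen : 2 ≤ L.length := by
      have := List.length_pos_of_ne_nil hL0
      obtain ⟨k, hk⟩ := hL
      omega
    rw [List.getLast?_eq_getElem?] at hy
    rw [List.head?_eq_getElem?] at hq
    have := nodup_idx hS.nodup hy hq
    omega
  exact ctx.g3 x a b y q (ctx.le ha) (ctx.le hb) hxy hxq hab (hne _ _ haC hyD) (hne _ _ haC hqD)
    (hne _ _ hbC hyD) (hne _ _ hbC hqD) hyq

/-- No edge from `C` to an even path. -/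
lemma Ctx.evenPath {V : Type*} [Fintype V] {G H : SimpleGraph V} {C : H.ConnectedComponent}
    (ctx : Ctx G H C) {D : H.ConnectedComponent} (hD : D ≠ C) {L : List V} {x y : V}
    (hS : Span G H D L) (hL : Even L.length) (hy : H.connectedComponentMk y = D)
    (hx : H.connectedComponentMk x = C) (hxy : G.Adj x y) : False := by
  have main : ∀ A B : List V, Span G H D (A ++ y :: B) → Odd A.length → Even B.length → False := by
    intro A B hS hA hB
    obtain ⟨x', hxx⟩ := ctx.nbr hx
    have e : A ++ y :: B = (A ++ [y]) ++ B := by simp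
    have hSr := hS.rev
    have hev : Even (A ++ y :: B).reverse.length := by
      rw [List.length_reverse, List.length_append, List.length_cons]
      exact hA.add_odd hB.add_one
    rw [e] at hS
    refine ctx.attach hD hS.nodup hS.mem hS.chain.left_of_append (y := y) (by simp) hxy hx hxx ?_
      (good_even hS.chain.right_of_append hS.nodup.of_append_right hB)
    intro _ p hp hadj
    refine ctx.E hD hSr hev (y := p) ?_ (Ctx.nbrC (G := G) hx hxx) hadj.symm
    rw [List.getLast?_reverse, e, List.head?_append_of_ne_nil _ (by simp)]
    exact hp
  have hm := (hS.mem y).2 hy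
  obtain ⟨A, B, rfl⟩ := List.append_of_mem hm
  rw [List.length_append, List.length_cons] at hL
  rcases Nat.even_or_odd A.length with hA | hA
  · refine main B.reverse A.reverse (by simpa using hS.rev) ?_ (by simpa using hA)
    rw [List.length_reverse]
    grind
  · refine main A B hS hA ?_
    grind

/-- Two attachments on an odd path. -/
lemma Ctx.oddPath {V : Type*} [Fintype V] {G H : SimpleGraph V} {C : H.ConnectedComponent}
    (ctx : Ctx G H C) {D : H.ConnectedComponent} (hD : D ≠ C) {A B E : List V} {x y z w : V}
    (hS : Span G H D (A ++ y :: (B ++ w :: E))) (hL : Odd (A ++ y :: (B ++ w :: E)).length)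
    (hx : H.connectedComponentMk x = C) (hxy : G.Adj x y)
    (hz : H.connectedComponentMk z = C) (hzw : G.Adj z w) : False := by
  simp only [List.length_append, List.length_cons] at hL
  have hA : Odd A.length := by
    by_contra h
    rw [Nat.not_odd_iff_even] at h
    refine ctx.S hD hS h ?_ hx hxy
    simp only [List.length_append, List.length_cons]
    grind
  have e2 : A ++ y :: (B ++ w :: E) = (A ++ y :: B) ++ w :: E := by simp
  have hE : Odd E.length := by
    by_contra h
    rw [Nat.not_odd_iff_even] at h
    refine ctx.S hD (e2 ▸ hS) ?_ h hz hzw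
    simp only [List.length_append, List.length_cons]
    grind
  have hB : Odd B.length := by grind
  obtain ⟨b, B, rfl⟩ : ∃ b B', B = b :: B' := by
    cases B with
    | nil => simp at hB
    | cons b B' => exact ⟨b, B', rfl⟩
  obtain ⟨p, A', hA'⟩ : ∃ p A', A = p :: A' := by
    cases A with
    | nil => simp at hA
    | cons b B' => exact ⟨b, B', rfl⟩
  have hE0 : E ≠ [] := by rintro rfl; simp at hE
  obtain ⟨q, hq⟩ : ∃ q, E.getLast? = some q :=
    ⟨E.getLast hE0, List.getLast?_eq_some_getLast hE0⟩
  have hbq : G.Adj b q := by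
    by_contra hno
    obtain ⟨x', hxx⟩ := ctx.nbr hx
    have e : A ++ y :: (b :: B ++ w :: E) = (A ++ [y]) ++ (b :: B ++ w :: E) := by simp
    have hS' := hS
    rw [e] at hS'
    refine ctx.attach hD hS'.nodup hS'.mem hS'.chain.left_of_append (y := y) (by simp) hxy hx hxx
      ?_ (Or.inr ⟨hS'.chain.right_of_append, hS'.nodup.of_append_right, by simp; omega, ?_⟩)
    · intro _ p' hp' hadj
      have : p = p' := by simpa [hA'] using hp'
      subst this
      refine ctx.S hD (A := []) (B := A' ++ y :: (b :: B ++ w :: E)) (x := x') (y := p) ?_ (by simp)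
        ?_ (Ctx.nbrC (G := G) hx hxx) hadj.symm
      · simpa [hA'] using hS
      · subst hA'
        simp only [List.length_append, List.length_cons] at hL ⊢
        grind
    · intro _ a c ha hc
      have h1 : b = a := by simpa using ha
      have h2 : q = c := by
        rw [List.getLast?_append_of_ne_nil _ (by simp)] at hc
        have : (w :: E).getLast? = E.getLast? := by
          rw [show w :: E = [w] ++ E from rfl, List.getLast?_append_of_ne_nil _ hE0]
        rw [this, hq] at hc
        simpa using hc
      subst h1 h2
      exact hno
  -- rotate
  have hS2 : Span G H D ((A ++ [y, b] ++ E.reverse) ++ w :: B.reverse) := by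
    have e : A ++ y :: (b :: B ++ w :: E) = (A ++ [y, b]) ++ (B ++ w :: E) := by simp
    rw [e] at hS
    have hrev : E.reverse ++ w :: B.reverse = (B ++ w :: E).reverse := by simp
    rw [List.append_assoc, hrev]
    refine ⟨?_, ?_, ?_⟩
    · refine List.Perm.nodup_iff ?_ |>.1 hS.nodup
      exact (List.Perm.refl _).append (List.reverse_perm _).symm
    · refine hS.chain.left_of_append.append (chain_rev hS.chain.right_of_append) ?_
      intro a ha c hc
      have h1 : b = a := by simpa using ha
      have h2 : q = c := by
        rw [List.head?_reverse, List.getLast?_append_of_ne_nil _ (by simp)] at hc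
        have : (w :: E).getLast? = E.getLast? := by
          rw [show w :: E = [w] ++ E from rfl, List.getLast?_append_of_ne_nil _ hE0]
        rw [this, hq] at hc
        simpa using hc
      subst h1 h2
      exact hbq
    · intro v
      rw [← hS.mem]
      simp only [List.mem_append, List.mem_reverse]
  refine ctx.S hD hS2 ?_ ?_ hz hzw
  · simp only [List.length_append, List.length_cons, List.length_reverse, List.length_nil]
    grind
  · simp only [List.length_cons, List.length_reverse] at hB ⊢
    grind

lemma Ctx.oddPath' {V : Type*} [Fintype V] {G H : SimpleGraph V} {C : H.ConnectedComponent}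
    (ctx : Ctx G H C) {D : H.ConnectedComponent} (hD : D ≠ C) {L : List V} {x y z w : V}
    (hS : Span G H D L) (hL : Odd L.length) (hxz : x ≠ z)
    (hx : H.connectedComponentMk x = C) (hxy : G.Adj x y)
    (hz : H.connectedComponentMk z = C) (hzw : G.Adj z w)
    (hy : H.connectedComponentMk y = D) (hw : H.connectedComponentMk w = D) : False := by
  have hm := (hS.mem y).2 hy
  have hm' := (hS.mem w).2 hw
  obtain ⟨A, B, rfl⟩ := List.append_of_mem hm
  rw [List.mem_append, List.mem_cons] at hm'
  rcases hm' with h | rfl | h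
  · obtain ⟨A, A', rfl⟩ := List.append_of_mem h
    rw [List.append_assoc, List.cons_append] at hS hL
    exact ctx.oddPath hD hS hL hz hzw hx hxy
  · rw [List.length_append, List.length_cons] at hL
    have hA : Odd A.length := by
      by_contra h
      rw [Nat.not_odd_iff_even] at h
      exact ctx.S hD hS h (by grind) hx hxy
    have hB : Odd B.length := by grind
    rcases A.eq_nil_or_concat' with rfl | ⟨A, a, rfl⟩
    · simp at hA
    rcases B with _ | ⟨b, B⟩
    · simp at hB
    have hc : G.Adj a w ∧ G.Adj w b := by
      have := hS.chain
      simp only [List.append_assoc, List.singleton_append] at this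
      have := this.right_of_append
      simp only [List.isChain_cons_cons] at this
      exact ⟨this.1, this.2.1⟩
    have hab : a ≠ b := by
      have := hS.nodup
      simp only [List.append_assoc, List.singleton_append] at this
      have := this.of_append_right
      rintro rfl
      simp at this
    have haD := (hS.mem a).1 (by simp)
    have hbD := (hS.mem b).1 (by simp)
    have hne : ∀ u v, H.connectedComponentMk u = C → H.connectedComponentMk v = D → v ≠ u := by
      rintro u v h1 h2 rfl
      exact hD (h2.symm.trans h1)
    exact ctx.g3 w a b x z hc.1.symm hc.2 hxy.symm hzw.symm hab (hne _ _ hx haD) (hne _ _ hz haD)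
      (hne _ _ hx hbD) (hne _ _ hz hbD) hxz
  · obtain ⟨B, B', rfl⟩ := List.append_of_mem h
    exact ctx.oddPath hD hS hL hx hxy hz hzw

/-- The chord step. -/
lemma Ctx.chordStep {V : Type*} [Fintype V] {G H : SimpleGraph V} {C : H.ConnectedComponent}
    (ctx : Ctx G H C) {x y x' : V} (hx : H.connectedComponentMk x = C)
    (hy : H.connectedComponentMk y = C) (hxy : G.Adj x y) (hn : ¬ H.Adj x y) (hxx : H.Adj x x') :
    ∃ y', H.connectedComponentMk y' = C ∧ G.Adj x' y' ∧ ¬ H.Adj x' y' := by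
  obtain ⟨L, hS, hc, hh, hl, ho⟩ := ctx.clist hx hxx
  have hm := (hS.mem y).2 hy
  obtain ⟨A, B, rfl⟩ := List.append_of_mem hm
  have hyx' : y ≠ x' := by rintro rfl; exact hn hxx
  rcases A.eq_nil_or_concat' with rfl | ⟨A, a, rfl⟩
  · simp only [List.nil_append, List.head?_cons, Option.some.injEq] at hh
    exact absurd hh hxy.ne'
  rcases B.eq_nil_or_concat' with rfl | ⟨B, b, rfl⟩
  · simp only [List.getLast?_append, List.getLast?_singleton, Option.some_or,
      Option.some.injEq] at hl
    exact absurd hl hyx'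
  have hb : b = x' := by
    rw [List.getLast?_append_of_ne_nil _ (by simp), ← List.cons_append,
      List.getLast?_append_of_ne_nil _ (by simp)] at hl
    simpa using hl
  subst hb
  have hmem := hS.mem
  refine ⟨a, (hmem a).1 (by simp), ?_, ?_⟩
  · by_contra hno
    refine replace (D := C) (L₁ := (A ++ [a]).reverse ++ y :: (B ++ [b])) (L₂ := []) ctx.hmin
      ctx.hC ⟨?_, ?_, ?_, ?_⟩ (Or.inl rfl) (by simp) ?_ (fun _ => rfl)
    · refine (chain_rev hS.chain.left_of_append).append hS.chain.right_of_append ?_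
      intro u hu v hv
      rw [List.getLast?_reverse] at hu
      rw [List.head?_append_of_ne_nil _ (by simp)] at hh
      rw [hh] at hu
      simp only [Option.mem_def, Option.some.injEq, List.head?_cons] at hu hv
      subst hu hv
      exact hxy
    · refine List.Perm.nodup_iff ?_ |>.1 hS.nodup
      exact (List.reverse_perm _).symm.append (List.Perm.refl _)
    · simp; omega
    · intro _ u v hu hv hadj
      have h1 : a = u := by simpa using hu
      have h2 : b = v := by
        rw [List.getLast?_append_of_ne_nil _ (by simp), ← List.cons_append,
          List.getLast?_append_of_ne_nil _ (by simp)] at hv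
        simpa using hv
      subst h1 h2
      exact hno hadj.symm
    · intro v
      have := hmem v
      simp only [List.mem_append, List.mem_reverse] at this ⊢
      simp only [List.not_mem_nil, or_false, or_self]
      exact this
  · intro hba
    -- `b` has neighbours `x`, `a` and the predecessor of `b`
    have hnd := hS.nodup
    have hax : a ≠ x := by
      rintro rfl
      have h1 := hc
      rw [List.append_assoc] at h1
      have h1 := h1.right_of_append
      simp only [List.singleton_append, List.isChain_cons_cons] at h1
      exact hn h1.1
    obtain ⟨c, hcB, hcb⟩ : ∃ c, c ∈ y :: B ∧ H.Adj c b := by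
      refine ⟨(y :: B).getLast (by simp), List.getLast_mem _, ?_⟩
      have h1 := hc.right_of_append
      rw [← List.cons_append, List.isChain_append] at h1
      exact h1.2.2 _ (List.getLast?_eq_some_getLast _) _ (by simp)
    have hxA : x ∈ A ++ [a] := by
      rw [List.head?_append_of_ne_nil _ (by simp)] at hh
      exact List.mem_of_mem_head? hh
    rw [List.nodup_append] at hnd
    have hcc : c ∈ y :: (B ++ [b]) := by
      rw [← List.cons_append]
      exact List.mem_append_left _ hcB
    rcases ctx.d2 b x a c hxx.symm hba hcb.symm with h | h | h
    · exact hax h.symm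
    · exact hnd.2.2 x hxA c hcc h
    · exact hnd.2.2 a (by simp) c hcc h

end VF

namespace VF

lemma mkCtx {V : Type*} [Fintype V] {G H : SimpleGraph V} (hG : IsCubic G)
    (hmin : IsMinValidFactor G H) {C : H.ConnectedComponent} (hC : OddCycleComp H C) :
    Ctx G H C where
  hmin := hmin
  hC := hC
  le := hmin.1.1.1
  d2 := by
    intro v a b c ha hb hc
    by_contra hno
    push Not at hno
    have h := (hmin.1.1.2.1 v).2
    rw [Nat.card_coe_set_eq] at h
    have : 2 < (H.neighborSet v).ncard := by
      rw [Set.two_lt_ncard]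
      exact ⟨a, ha, b, hb, c, hc, hno.1, hno.2.1, hno.2.2⟩
    omega
  g3 := by
    intro v a b c d ha hb hc hd h1 h2 h3 h4 h5 h6
    have h := hG v
    rw [Nat.card_coe_set_eq, Set.ncard_eq_three] at h
    obtain ⟨p, q, r, -, -, -, h⟩ := h
    have ha : a ∈ G.neighborSet v := ha
    have hb : b ∈ G.neighborSet v := hb
    have hc : c ∈ G.neighborSet v := hc
    have hd : d ∈ G.neighborSet v := hd
    rw [h] at ha hb hc hd
    simp only [Set.mem_insert_iff, Set.mem_singleton_iff] at ha hb hc hd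
    grind
  two := by
    intro v hv
    have h := hC.2 v hv
    rw [Nat.card_coe_set_eq, Set.ncard_eq_two] at h
    obtain ⟨a, b, hab, h⟩ := h
    refine ⟨a, b, hab, ?_, ?_⟩
    · rw [← mem_neighborSet, h]; simp
    · rw [← mem_neighborSet, h]; simp

/-- No chords. -/
lemma Ctx.noChord {V : Type*} [Fintype V] {G H : SimpleGraph V} {C : H.ConnectedComponent}
    (ctx : Ctx G H C) {x y : V} (hx : H.connectedComponentMk x = C)
    (hy : H.connectedComponentMk y = C) (hxy : G.Adj x y) (hn : ¬ H.Adj x y) : False := by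
  classical
  have all : ∀ v, H.connectedComponentMk v = C →
      ∃ u, H.connectedComponentMk u = C ∧ G.Adj v u ∧ ¬ H.Adj v u := by
    intro v hv
    have hr : H.Reachable x v := ConnectedComponent.eq.1 (hx.trans hv.symm)
    refine (reach_inv (P := fun v => H.connectedComponentMk v = C ∧
      ∃ u, H.connectedComponentMk u = C ∧ G.Adj v u ∧ ¬ H.Adj v u) ?_ hr
      ⟨hx, y, hy, hxy, hn⟩).2
    rintro a b hab ⟨ha, u, hu, h1, h2⟩
    exact ⟨Ctx.nbrC (G := G) ha hab, ctx.chordStep ha hu h1 h2 hab⟩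
  let M : SimpleGraph C.supp :=
    { Adj := fun u v => G.Adj u.1 v.1 ∧ ¬ H.Adj u.1 v.1
      symm := ⟨fun u v h => ⟨h.1.symm, fun h' => h.2 h'.symm⟩⟩
      loopless := ⟨fun u h => h.1.ne rfl⟩ }
  have hdeg : ∀ u, M.degree u = 1 := by
    intro u
    rw [degree_eq_one_iff_existsUnique_adj]
    obtain ⟨v, hv, h1, h2⟩ := all u.1 u.2
    refine ⟨⟨v, hv⟩, ⟨h1, h2⟩, ?_⟩
    rintro ⟨w, hw⟩ ⟨h3, h4⟩
    ext
    by_contra hne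
    obtain ⟨a, b, hab, ha, hb⟩ := ctx.two u.1 u.2
    have key : ∀ c w, H.Adj u.1 c → ¬ H.Adj u.1 w → c ≠ w := by
      rintro c w h h' rfl; exact h' h
    exact ctx.g3 u.1 a b v w (ctx.le ha) (ctx.le hb) h1 h3 hab (key _ _ ha h2) (key _ _ ha h4)
      (key _ _ hb h2) (key _ _ hb h4) (fun h => hne h.symm)
  have h := M.even_card_odd_degree_vertices
  simp only [hdeg, odd_one, Finset.filter_true] at h
  have ho := ctx.hC.1
  rw [Nat.card_eq_fintype_card] at ho
  rw [Finset.card_univ] at h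
  exact (Nat.not_odd_iff_even.2 h) ho

lemma pathSpan {V : Type*} [Fintype V] {G H : SimpleGraph V} (hle : H ≤ G) (h2 : D2 H)
    {D : H.ConnectedComponent} {v : V} (hv : H.connectedComponentMk v = D)
    (h1 : Nat.card (H.neighborSet v) = 1) : ∃ L, Span G H D L := by
  rw [Nat.card_coe_set_eq, Set.ncard_eq_one] at h1
  obtain ⟨a, ha⟩ := h1
  have h1 : ∀ u w, H.Adj v u → H.Adj v w → u = w := by
    intro u w hu hw
    rw [← mem_neighborSet, ha] at hu hw
    exact hu.trans hw.symm
  obtain ⟨L, hn, hc, hh, hcl⟩ := path_list h2 h1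
  refine ⟨L, hn, hc.imp (fun _ _ h => hle h), fun u => ?_⟩
  rw [mem_iff_comp hc hcl (List.mem_of_mem_head? hh), hv]

end VF

/-- Every vertex of an odd cycle of a minimal valid factor is adjacent in G to a
vertex of an odd path component, and two distinct vertices of the cycle are
joined to two distinct odd path components. -/
theorem stmt12 {V : Type*} [Fintype V] (G H : SimpleGraph V) (hG : IsCubic G)
    (hmin : IsMinValidFactor G H)
    (C : H.ConnectedComponent) (hC : OddCycleComp H C) :
    (∀ x ∈ C.supp, ∃ y : V, G.Adj x y ∧ OddPathComp H (H.connectedComponentMk y)) ∧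
    (∀ x z : V, x ∈ C.supp → z ∈ C.supp → x ≠ z →
      ∀ y w : V, G.Adj x y → G.Adj z w →
        OddPathComp H (H.connectedComponentMk y) →
        OddPathComp H (H.connectedComponentMk w) →
        H.connectedComponentMk y ≠ H.connectedComponentMk w) := by
  have ctx := VF.mkCtx hG hmin hC
  have hne : ∀ D, OddPathComp H D → D ≠ C := by
    rintro D ⟨-, v, hv, h1⟩ rfl
    have := hC.2 v hv
    omega
  constructor
  · intro x hx
    have hx' : H.connectedComponentMk x = C := hx
    obtain ⟨y, hxy, hn⟩ : ∃ y, G.Adj x y ∧ ¬ H.Adj x y := by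
      by_contra hno
      push Not at hno
      have hsub : G.neighborSet x ⊆ H.neighborSet x := fun y hy => hno y hy
      have h1 := Set.ncard_le_ncard hsub (Set.toFinite _)
      have h2 := hG x
      have h3 := hC.2 x hx
      rw [Nat.card_coe_set_eq] at h2 h3
      omega
    refine ⟨y, hxy, ?_⟩
    by_contra hop
    set D := H.connectedComponentMk y with hD
    by_cases hDC : D = C
    · exact ctx.noChord hx' hDC hxy hn
    have hdeg := hmin.1.1.2.1
    by_cases h1 : ∃ v ∈ D.supp, Nat.card (H.neighborSet v) = 1
    · obtain ⟨v, hv, h1⟩ := h1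
      obtain ⟨L, hS⟩ := VF.pathSpan ctx.le ctx.d2 hv h1
      rcases Nat.even_or_odd L.length with he | ho
      · exact ctx.evenPath hDC hS he hD.symm hx' hxy
      · rw [← hS.card] at ho
        exact hop ⟨ho, v, hv, h1⟩
    · push Not at h1
      have htwo : ∀ v, H.connectedComponentMk v = H.connectedComponentMk y →
          ∃ a b, a ≠ b ∧ H.Adj v a ∧ H.Adj v b := by
        intro v hv
        have h2 := h1 v hv
        have h3 := hdeg v
        have h : Nat.card (H.neighborSet v) = 2 := by omega
        rw [Nat.card_coe_set_eq, Set.ncard_eq_two] at h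
        obtain ⟨a, b, hab, h⟩ := h
        refine ⟨a, b, hab, ?_, ?_⟩
        · rw [← mem_neighborSet, h]; simp
        · rw [← mem_neighborSet, h]; simp
      obtain ⟨y', -, -, hyy, -⟩ := htwo y rfl
      obtain ⟨L, hn, hc, hh, -, hm⟩ := VF.cycle_list ctx.d2 hyy htwo
      have hS : VF.Span G H D L := ⟨hn, hc.imp (fun _ _ h => ctx.le h), hm⟩
      rcases Nat.even_or_odd L.length with he | ho
      · exact ctx.evenPath hDC hS he hD.symm hx' hxy
      · cases L with
        | nil => simp at hh
        | cons a L =>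
          simp only [List.head?_cons, Option.some.injEq] at hh
          subst hh
          rw [List.length_cons, Nat.odd_add_one, Nat.not_odd_iff_even] at ho
          exact ctx.S hDC (A := []) (B := L) hS (by simp) ho hx' hxy
  · intro x z hx hz hxz y w hxy hzw hoy how heq
    obtain ⟨ho, v, hv, h1⟩ := hoy
    obtain ⟨L, hS⟩ := VF.pathSpan ctx.le ctx.d2 hv h1
    rw [hS.card] at ho
    exact ctx.oddPath' (hne _ ⟨hS.card ▸ ho, v, hv, h1⟩) hS ho hxz hx hxy hz hzw rfl heq.symm
end

section
/- Let G be a cubic graph and P* a valid factor of G minimizing the number of components and, subject to that, the number of odd cycles. Then no path component of P* is joined by edges of G to two distinct odd cycle components of P*. -/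
open SimpleGraph

namespace Aux13

set_option linter.unusedSectionVars false

variable {V : Type*}

/-- degree -/
noncomputable abbrev dg (K : SimpleGraph V) (v : V) : ℕ := Nat.card (K.neighborSet v)

/-- delete one edge -/
def dl (K : SimpleGraph V) (x a : V) : SimpleGraph V := K.deleteEdges {s(x, a)}

/-- join by one edge -/
def jn (K : SimpleGraph V) (x a : V) : SimpleGraph V := K ⊔ SimpleGraph.edge x a

lemma dl_adj (K : SimpleGraph V) (x a u v : V) :
    (dl K x a).Adj u v ↔ K.Adj u v ∧ ¬ (u = x ∧ v = a ∨ u = a ∧ v = x) := by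
  simp [dl]

lemma jn_adj (K : SimpleGraph V) {x a : V} (h : x ≠ a) (u v : V) :
    (jn K x a).Adj u v ↔ K.Adj u v ∨ (u = x ∧ v = a ∨ u = a ∧ v = x) := by
  simp only [jn, SimpleGraph.sup_adj, SimpleGraph.edge_adj]
  constructor
  · rintro (h | h)
    · exact Or.inl h
    · exact Or.inr h.1
  · rintro (h' | h')
    · exact Or.inl h'
    · refine Or.inr ⟨h', ?_⟩
      rintro rfl
      rcases h' with h' | h' <;> exact h (by rw [← h'.1, ← h'.2])

lemma dl_le (K : SimpleGraph V) (x a : V) : dl K x a ≤ K := fun u v h =>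
  ((dl_adj K x a u v).1 h).1

lemma le_jn (K : SimpleGraph V) (x a : V) : K ≤ jn K x a := le_sup_left

lemma dl_comm (K : SimpleGraph V) (x a : V) : dl K x a = dl K a x := by
  simp [dl, Sym2.eq_swap]

lemma jn_comm (K : SimpleGraph V) (x a : V) : jn K x a = jn K a x := by
  simp [jn, SimpleGraph.edge_comm]

lemma jn_dl (K : SimpleGraph V) {x a : V} (h : K.Adj x a) : jn (dl K x a) x a = K := by
  ext u v
  rw [jn_adj _ h.ne, dl_adj]
  constructor
  · rintro (h' | ⟨rfl, rfl⟩ | ⟨rfl, rfl⟩)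
    · exact h'.1
    · exact h
    · exact h.symm
  · intro h'
    tauto

section
variable [Finite V]

lemma dg_dl_left (K : SimpleGraph V) {x a : V} (h : K.Adj x a) :
    dg (dl K x a) x + 1 = dg K x := by
  have : (dl K x a).neighborSet x = K.neighborSet x \ {a} := by
    ext v
    simp only [SimpleGraph.mem_neighborSet, dl_adj, Set.mem_sdiff, Set.mem_singleton_iff]
    have := h.ne
    tauto
  show ((dl K x a).neighborSet x).ncard + 1 = (K.neighborSet x).ncard
  rw [this]
  exact Set.ncard_sdiff_singleton_add_one h (Set.toFinite _)

lemma dg_dl_right (K : SimpleGraph V) {x a : V} (h : K.Adj x a) :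
    dg (dl K x a) a + 1 = dg K a := by
  rw [dl_comm]; exact dg_dl_left K h.symm

lemma dg_congr {K L : SimpleGraph V} {u : V} (h : ∀ v, K.Adj u v ↔ L.Adj u v) :
    dg K u = dg L u := by
  have : K.neighborSet u = L.neighborSet u := by ext v; exact h v
  simp [dg, this]

lemma dg_dl_other (K : SimpleGraph V) {x a u : V} (hx : u ≠ x) (ha : u ≠ a) :
    dg (dl K x a) u = dg K u := by
  apply dg_congr
  intro v
  rw [dl_adj]; tauto

lemma dg_jn_left (K : SimpleGraph V) {x a : V} (hn : x ≠ a) (h : ¬ K.Adj x a) :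
    dg (jn K x a) x = dg K x + 1 := by
  have : (jn K x a).neighborSet x = insert a (K.neighborSet x) := by
    ext v
    simp only [SimpleGraph.mem_neighborSet, jn_adj _ hn, Set.mem_insert_iff]
    tauto
  show ((jn K x a).neighborSet x).ncard = (K.neighborSet x).ncard + 1
  rw [this]
  exact Set.ncard_insert_of_notMem h (Set.toFinite _)

lemma dg_jn_right (K : SimpleGraph V) {x a : V} (hn : x ≠ a) (h : ¬ K.Adj x a) :
    dg (jn K x a) a = dg K a + 1 := by
  rw [jn_comm]; exact dg_jn_left K hn.symm (fun h' => h h'.symm)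

lemma dg_jn_other (K : SimpleGraph V) {x a u : V} (hn : x ≠ a) (hx : u ≠ x) (ha : u ≠ a) :
    dg (jn K x a) u = dg K u := by
  apply dg_congr
  intro v
  rw [jn_adj _ hn]; tauto

lemma reach_closed {K : SimpleGraph V} (S : V → Prop)
    (hS : ∀ u v, S u → K.Adj u v → S v) {u v : V} (hu : S u) (h : K.Reachable u v) : S v := by
  obtain ⟨p⟩ := h
  induction p with
  | nil => exact hu
  | cons h p ih => exact ih (hS _ _ hu h)

lemma reach_sub {K L : SimpleGraph V}
    (hS : ∀ u v, K.Adj u v → L.Reachable u v) {u v : V} (h : K.Reachable u v) :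
    L.Reachable u v :=
  reach_closed (K := K) (fun w => L.Reachable u w) (fun _ _ h1 h2 => h1.trans (hS _ _ h2))
    (SimpleGraph.Reachable.refl u) h

lemma reach_jn {K : SimpleGraph V} {x y : V} (hn : x ≠ y) {u v : V}
    (h : (jn K x y).Reachable u v) :
    K.Reachable u v ∨ ((K.Reachable x u ∨ K.Reachable y u) ∧
      (K.Reachable x v ∨ K.Reachable y v)) := by
  refine reach_closed (K := jn K x y) (fun v => K.Reachable u v ∨
    ((K.Reachable x u ∨ K.Reachable y u) ∧ (K.Reachable x v ∨ K.Reachable y v))) ?_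
    (Or.inl (SimpleGraph.Reachable.refl u)) h
  intro a b h1 h2
  rw [jn_adj _ hn] at h2
  rcases h2 with h2 | ⟨rfl, rfl⟩ | ⟨rfl, rfl⟩
  · rcases h1 with h1 | ⟨h1, h3⟩
    · exact Or.inl (h1.trans h2.reachable)
    · exact Or.inr ⟨h1, h3.imp (fun h => h.trans h2.reachable) (fun h => h.trans h2.reachable)⟩
  · rcases h1 with h1 | ⟨h1, h3⟩
    · exact Or.inr ⟨Or.inl h1.symm, Or.inr (SimpleGraph.Reachable.refl _)⟩
    · exact Or.inr ⟨h1, Or.inr (SimpleGraph.Reachable.refl _)⟩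
  · rcases h1 with h1 | ⟨h1, h3⟩
    · exact Or.inr ⟨Or.inr h1.symm, Or.inl (SimpleGraph.Reachable.refl _)⟩
    · exact Or.inr ⟨h1, Or.inl (SimpleGraph.Reachable.refl _)⟩

lemma num_eq {K L : SimpleGraph V} (h : ∀ u v, K.Reachable u v ↔ L.Reachable u v) :
    numComponents K = numComponents L := by
  unfold numComponents
  apply Nat.card_congr
  exact Quot.congrRight h

lemma num_jn_lt {K : SimpleGraph V} {x y : V} (h : ¬ K.Reachable x y) :
    numComponents (jn K x y) < numComponents K := by
  have hn : x ≠ y := by rintro rfl; exact h (SimpleGraph.Reachable.refl _)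
  unfold numComponents
  let f : K.ConnectedComponent → (jn K x y).ConnectedComponent :=
    fun c => c.map (SimpleGraph.Hom.ofLE (le_jn K x y))
  have hf : Function.Surjective f := by
    intro c
    induction c using SimpleGraph.ConnectedComponent.ind with
    | h v => exact ⟨K.connectedComponentMk v, rfl⟩
  refine lt_of_le_of_ne (Nat.card_le_card_of_surjective f hf) ?_
  intro he
  have hb := (Nat.bijective_iff_surjective_and_card f).2 ⟨hf, he.symm⟩
  have : f (K.connectedComponentMk x) = f (K.connectedComponentMk y) := by
    show (jn K x y).connectedComponentMk x = (jn K x y).connectedComponentMk y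
    apply SimpleGraph.ConnectedComponent.sound
    exact SimpleGraph.Adj.reachable ((jn_adj K hn x y).2 (by tauto))
  exact h (SimpleGraph.ConnectedComponent.exact (hb.1 this))

lemma num_le_jn {K : SimpleGraph V} {x y : V} (hn : x ≠ y) :
    numComponents K ≤ numComponents (jn K x y) + 1 := by
  classical
  unfold numComponents
  have hle : Nat.card {c : K.ConnectedComponent // c ≠ K.connectedComponentMk x}
      ≤ Nat.card (jn K x y).ConnectedComponent := by
    apply Nat.card_le_card_of_injective
      (fun c => c.1.map (SimpleGraph.Hom.ofLE (le_jn K x y)))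
    rintro ⟨c, hc⟩ ⟨d, hd⟩ hcd
    apply Subtype.ext
    revert hc hd hcd
    induction c using SimpleGraph.ConnectedComponent.ind with
    | h u =>
    induction d using SimpleGraph.ConnectedComponent.ind with
    | h v =>
    intro hc hd hcd
    have hcd' : (jn K x y).Reachable u v := SimpleGraph.ConnectedComponent.exact hcd
    have hc' : ¬ K.Reachable x u := fun h => hc (SimpleGraph.ConnectedComponent.sound h.symm)
    have hd' : ¬ K.Reachable x v := fun h => hd (SimpleGraph.ConnectedComponent.sound h.symm)
    apply SimpleGraph.ConnectedComponent.sound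
    rcases reach_jn hn hcd' with h | ⟨h1, h2⟩
    · exact h
    · exact (h1.resolve_left hc').symm.trans (h2.resolve_left hd')
  have h2 : Nat.card K.ConnectedComponent =
      Nat.card {c : K.ConnectedComponent // c ≠ K.connectedComponentMk x} + 1 := by
    have := Set.ncard_sdiff_singleton_add_one
      (Set.mem_univ (K.connectedComponentMk x)) (Set.toFinite _)
    rw [Set.ncard_univ] at this
    rw [← this]
    congr 1
    rw [← Nat.card_coe_set_eq]
    apply Nat.card_congr
    apply Equiv.subtypeEquivRight
    intro c; simp
  omega

lemma reach_dl {K : SimpleGraph V} {x a : V} (hxa : (dl K x a).Reachable x a) (u v : V) :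
    (dl K x a).Reachable u v ↔ K.Reachable u v := by
  refine ⟨fun h => h.mono (dl_le K x a), reach_sub ?_⟩
  intro u v h
  by_cases hcase : (u = x ∧ v = a ∨ u = a ∧ v = x)
  · rcases hcase with ⟨rfl, rfl⟩ | ⟨rfl, rfl⟩
    · exact hxa
    · exact hxa.symm
  · exact SimpleGraph.Adj.reachable ((dl_adj K x a u v).2 ⟨h, hcase⟩)

/-- all degrees are 1 or 2 -/
def Dok (K : SimpleGraph V) : Prop := ∀ v, 1 ≤ dg K v ∧ dg K v ≤ 2

open Classical in
lemma degree_comp [Fintype V] (K : SimpleGraph V) (c : K.ConnectedComponent) (v : c.supp) :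
    (K.induce c.supp).degree v = dg K v.1 := by
  rw [← SimpleGraph.card_neighborSet_eq_degree, ← Nat.card_eq_fintype_card]
  apply Nat.card_congr
  refine Equiv.ofBijective (fun w => ⟨w.1.1, w.2⟩) ⟨?_, ?_⟩
  · rintro ⟨⟨a, ha⟩, ha'⟩ ⟨⟨b, hb⟩, hb'⟩ h
    have h := congrArg Subtype.val h; simp only at h
    subst h; rfl
  · rintro ⟨b, hb⟩
    refine ⟨⟨⟨b, ?_⟩, hb⟩, rfl⟩
    have h1 := v.2
    rw [SimpleGraph.ConnectedComponent.mem_supp_iff] at h1 ⊢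
    rw [← h1]
    apply SimpleGraph.ConnectedComponent.sound
    exact (SimpleGraph.Adj.reachable hb).symm

/-- handshake: another vertex of degree 1 -/
lemma other_end {K : SimpleGraph V} (hK : Dok K) {x : V} (hx : dg K x = 1) :
    ∃ w, w ≠ x ∧ K.Reachable x w ∧ dg K w = 1 := by
  classical
  have := Fintype.ofFinite V
  let c := K.connectedComponentMk x
  have hxc : x ∈ c.supp := rfl
  obtain ⟨w, hw, hwo⟩ := (K.induce c.supp).exists_ne_odd_degree_of_exists_odd_degree ⟨x, hxc⟩
    (by rw [degree_comp, hx]; exact odd_one)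
  rw [degree_comp] at hwo
  refine ⟨w.1, fun h => hw (Subtype.ext h), ?_, ?_⟩
  · exact (SimpleGraph.ConnectedComponent.exact w.2).symm
  · have := hK w.1
    obtain ⟨k, hk⟩ := hwo
    omega

/-- at most two vertices of degree 1 in a component -/
lemma no_three {K : SimpleGraph V} (hK : Dok K) {u v w : V} (huv : u ≠ v) (huw : u ≠ w)
    (hvw : v ≠ w) (h1 : K.Reachable u v) (h2 : K.Reachable u w)
    (hu : dg K u = 1) (hv : dg K v = 1) (hw : dg K w = 1) : False := by
  classical
  have := Fintype.ofFinite V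
  let c := K.connectedComponentMk u
  have huc : u ∈ c.supp := rfl
  have hvc : v ∈ c.supp := SimpleGraph.ConnectedComponent.sound h1.symm
  have hwc : w ∈ c.supp := SimpleGraph.ConnectedComponent.sound h2.symm
  have hcon : (K.induce c.supp).Connected := c.connected_toSimpleGraph
  have hcard := hcon.card_vert_le_card_edgeSet_add_one
  rw [Nat.card_eq_fintype_card, Nat.card_eq_fintype_card, ← SimpleGraph.edgeFinset_card] at hcard
  have hsum := (K.induce c.supp).sum_degrees_eq_twice_card_edges
  simp only [degree_comp] at hsum
  let T : Finset c.supp := {⟨u, huc⟩, ⟨v, hvc⟩, ⟨w, hwc⟩}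
  have hT : T.card = 3 := by
    apply Finset.card_eq_three.2
    exact ⟨_, _, _, by simpa using huv, by simpa using huw, by simpa using hvw, rfl⟩
  have hb : ∑ v : c.supp, (dg K v.1 + if v ∈ T then 1 else 0) ≤ ∑ v : c.supp, 2 := by
    apply Finset.sum_le_sum
    intro t _
    split_ifs with ht
    · simp only [T, Finset.mem_insert, Finset.mem_singleton] at ht
      rcases ht with rfl | rfl | rfl
      · show dg K u + 1 ≤ 2
        omega
      · show dg K v + 1 ≤ 2
        omega
      · show dg K w + 1 ≤ 2
        omega
    · have := (hK t.1).2
      omega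
  rw [Finset.sum_add_distrib, hsum] at hb
  simp [hT] at hb
  simp at hcard
  omega

/-- opening a cycle -/
lemma open_cycle {K : SimpleGraph V} (hK : Dok K) {x : V}
    (hx : ∀ v, K.Reachable x v → dg K v = 2) :
    ∃ a, K.Adj x a ∧ (dl K x a).Reachable x a ∧ Dok (dl K x a) ∧ dg (dl K x a) x = 1 ∧
      dg (dl K x a) a = 1 := by
  have hx2 := hx x (SimpleGraph.Reachable.refl x)
  have hne : (K.neighborSet x).Nonempty := by
    rw [Set.nonempty_iff_ne_empty]
    intro h
    simp [dg, h] at hx2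
  obtain ⟨a, ha⟩ := hne
  have hxa : K.Adj x a := ha
  have hl := dg_dl_left K hxa
  have hr := dg_dl_right K hxa
  have ha2 := hx a hxa.reachable
  have hd : Dok (dl K x a) := by
    intro v
    by_cases h1 : v = x
    · subst h1; omega
    by_cases h2 : v = a
    · subst h2; omega
    rw [dg_dl_other K h1 h2]; exact hK v
  refine ⟨a, hxa, ?_, hd, by omega, by omega⟩
  obtain ⟨w, hw, hr', hw1⟩ := other_end hd (x := x) (by omega)
  by_cases h2 : w = a
  · subst h2; exact hr'
  · rw [dg_dl_other K hw h2, hx w (hr'.mono (dl_le _ _ _))] at hw1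
    omega

lemma join_ok {K : SimpleGraph V} (hK : Dok K) {x y : V} (hn : x ≠ y) (h : ¬ K.Adj x y)
    (hx : dg K x = 1) (hy : dg K y = 1) : Dok (jn K x y) := by
  intro v
  by_cases h1 : v = x
  · subst h1; rw [dg_jn_left K hn h]; omega
  by_cases h2 : v = y
  · subst h2; rw [dg_jn_right K hn h]; omega
  rw [dg_jn_other K hn h1 h2]; exact hK v

lemma jn_leG {G K : SimpleGraph V} (hK : K ≤ G) {x y : V} (h : G.Adj x y) : jn K x y ≤ G := by
  intro u v huv
  rw [jn_adj K h.ne] at huv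
  rcases huv with h' | ⟨rfl, rfl⟩ | ⟨rfl, rfl⟩
  · exact hK h'
  · exact h
  · exact h.symm

/-- two adjacent degree 1 vertices form a component of size 2 -/
lemma odd_not_adj {K : SimpleGraph V} {c : K.ConnectedComponent} (hodd : Odd (Nat.card c.supp))
    {u v : V} (hu : u ∈ c.supp) (h1 : dg K u = 1) (h2 : dg K v = 1)
    : ¬ K.Adj u v := by
  intro hadj
  obtain ⟨s, hs⟩ := Set.ncard_eq_one.1 (show (K.neighborSet u).ncard = 1 from h1)
  obtain ⟨t, ht⟩ := Set.ncard_eq_one.1 (show (K.neighborSet v).ncard = 1 from h2)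
  have hsv : v = s := by
    have : v ∈ K.neighborSet u := hadj
    rw [hs] at this; exact this
  have htu : u = t := by
    have : u ∈ K.neighborSet v := hadj.symm
    rw [ht] at this; exact this
  have hsupp : c.supp = {u, v} := by
    ext w
    constructor
    · intro hw
      have hr : K.Reachable u w := SimpleGraph.ConnectedComponent.exact (hu.trans hw.symm)
      refine reach_closed (K := K) (fun w => w ∈ ({u, v} : Set V)) ?_ (by simp) hr
      intro a b ha hb
      rcases ha with rfl | rfl
      · have : b ∈ K.neighborSet a := hb
        rw [hs] at this
        right; rw [hsv]; exact this
      · have : b ∈ K.neighborSet a := hb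
        rw [ht] at this
        left; rw [htu]; exact this
    · rintro (rfl | rfl)
      · exact hu
      · show K.connectedComponentMk w = c
        rw [← (show K.connectedComponentMk u = c from hu)]
        exact SimpleGraph.ConnectedComponent.sound hadj.symm.reachable
  rw [hsupp, Nat.card_coe_set_eq, Set.ncard_pair hadj.ne] at hodd
  exact absurd hodd (by decide)

lemma reach_jn_iff {K : SimpleGraph V} {x y : V} (hn : x ≠ y) (h : K.Reachable x y) (u v : V) :
    (jn K x y).Reachable u v ↔ K.Reachable u v := by
  refine ⟨reach_sub ?_, fun h => h.mono (le_jn K x y)⟩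
  intro a b hab
  rw [jn_adj K hn] at hab
  rcases hab with h' | ⟨rfl, rfl⟩ | ⟨rfl, rfl⟩
  · exact h'.reachable
  · exact h
  · exact h.symm

/-- every factor with degrees 1, 2 can be made valid without changing the components -/
lemma fix {G K : SimpleGraph V} (hle : K ≤ G) (hK : Dok K) :
    ∃ L, IsValidFactor G L ∧ numComponents L = numComponents K := by
  have : Finite (SimpleGraph V) := by
    classical
    have := Fintype.ofFinite V
    exact Finite.of_injective (fun G : SimpleGraph V => G.Adj) (fun a b h => by
      ext u v; exact iff_of_eq (congrFun (congrFun h u) v))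
  obtain ⟨L, hKL, hL⟩ := Finite.exists_le_maximal
    (p := fun L : SimpleGraph V => L ≤ G ∧ Dok L ∧ ∀ u v, L.Reachable u v ↔ K.Reachable u v)
    (a := K) ⟨hle, hK, fun _ _ => Iff.rfl⟩
  obtain ⟨⟨hLG, hLd, hLr⟩, hmax⟩ := hL
  refine ⟨L, ⟨hLG, hLd, ?_⟩, num_eq hLr⟩
  intro c hodd u v hu hv hne hu1 hv1 hG
  have hnadj : ¬ L.Adj u v := odd_not_adj hodd hu hu1 hv1
  have hr : L.Reachable u v := SimpleGraph.ConnectedComponent.exact (hu.trans hv.symm)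
  have := hmax (y := jn L u v) ⟨jn_leG hLG hG, join_ok hLd hne hnadj hu1 hv1, fun a b =>
    (reach_jn_iff hne hr a b).trans (hLr a b)⟩ (le_jn L u v)
  exact hnadj (this ((jn_adj L hne u v).2 (by tauto)))

/-- claim 1 -/
lemma merge_end {G K : SimpleGraph V} (hle : K ≤ G) (hK : Dok K) {x y : V}
    (hx : ∀ v, K.Reachable x v → dg K v = 2) (hy : dg K y = 1)
    (hxy : G.Adj x y) : ∃ L, L ≤ G ∧ Dok L ∧ numComponents L < numComponents K := by
  have hnr : ¬ K.Reachable x y := fun h => by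
    have := hx y h
    omega
  obtain ⟨a, hxa, hr, hd, hx1, ha1⟩ := open_cycle hK hx
  have hnr' : ¬ (dl K x a).Reachable x y := fun h => hnr (h.mono (dl_le _ _ _))
  have hya : y ≠ a := by rintro rfl; exact hnr hxa.reachable
  refine ⟨jn (dl K x a) x y, jn_leG ((dl_le _ _ _).trans hle) hxy,
    join_ok hd hxy.ne (fun h => hnr' h.reachable) hx1 ?_, ?_⟩
  · rw [dg_dl_other K hxy.ne.symm hya]; exact hy
  · rw [← num_eq (reach_dl hr)]
    exact (num_jn_lt hnr' :)

/-- claim 2 -/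
lemma merge_cycles {G K : SimpleGraph V} (hle : K ≤ G) (hK : Dok K) {x y : V}
    (hx : ∀ v, K.Reachable x v → dg K v = 2) (hy : ∀ v, K.Reachable y v → dg K v = 2)
    (hnr : ¬ K.Reachable x y)
    (hxy : G.Adj x y) : ∃ L, L ≤ G ∧ Dok L ∧ numComponents L < numComponents K := by
  obtain ⟨a, hya, hr, hd, hy1, ha1⟩ := open_cycle hK hy
  have := merge_end (G := G) (K := dl K y a) ((dl_le _ _ _).trans hle) hd (x := x) (y := y) ?_
    hy1 hxy
  · rwa [num_eq (reach_dl hr)] at this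
  · intro v hv
    have hv' := hv.mono (dl_le _ _ _)
    rw [dg_dl_other K]
    · exact hx v hv'
    · rintro rfl; exact hnr hv'
    · rintro rfl; exact hnr (hv'.trans hya.symm.reachable)

lemma first_step {K : SimpleGraph V} {y y' : V} (h : K.Reachable y y') (hne : y ≠ y') :
    ∃ z, K.Adj y z ∧ (dl K y z).Reachable z y' := by
  classical
  obtain ⟨p, hp⟩ := h.exists_isPath
  cases p with
  | nil => exact absurd rfl hne
  | @cons _ z _ hadj q =>
    rw [SimpleGraph.Walk.cons_isPath_iff] at hp
    refine ⟨z, hadj, ⟨q.transfer (dl K y z) ?_⟩⟩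
    intro e he
    simp only [dl, SimpleGraph.edgeSet_deleteEdges, Set.mem_sdiff, Set.mem_singleton_iff]
    refine ⟨q.edges_subset_edgeSet he, ?_⟩
    rintro rfl
    exact hp.2 (q.fst_mem_support_of_mem_edges he)

/-- components as sets -/
def ocs (K : SimpleGraph V) : Set (Set V) :=
  {S | ∃ w, S = {v | K.Reachable w v} ∧ Odd S.ncard ∧ ∀ v ∈ S, dg K v = 2}

lemma supp_mk (K : SimpleGraph V) (w : V) :
    (K.connectedComponentMk w).supp = {v | K.Reachable w v} := by
  ext v
  exact ⟨fun h => (SimpleGraph.ConnectedComponent.exact h).symm,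
    fun h => SimpleGraph.ConnectedComponent.sound h.symm⟩

lemma numOdd_eq (K : SimpleGraph V) : numOddCycles K = (ocs K).ncard := by
  unfold numOddCycles
  rw [← Nat.card_coe_set_eq]
  refine Nat.card_congr (Equiv.ofBijective (fun c => ⟨c.1.supp, ?_⟩) ⟨?_, ?_⟩)
  · obtain ⟨c, hc⟩ := c
    induction c using SimpleGraph.ConnectedComponent.ind with
    | h w => exact ⟨w, supp_mk K w, hc.1, hc.2⟩
  · rintro ⟨c, hc⟩ ⟨d, hd⟩ h
    simp only [Subtype.mk.injEq] at h
    exact Subtype.ext (SimpleGraph.ConnectedComponent.supp_injective h)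
  · rintro ⟨S, w, hS, h1, h2⟩
    subst hS
    refine ⟨⟨K.connectedComponentMk w, ?_, ?_⟩, Subtype.ext (supp_mk K w)⟩
    · rw [supp_mk]; exact h1
    · intro v hv
      rw [supp_mk] at hv
      exact h2 v hv

end

end Aux13

/-- No path component of a minimal valid factor is joined by edges of G to two
distinct odd cycle components. -/
theorem stmt13 {V : Type*} [Fintype V] (G H : SimpleGraph V) (hG : IsCubic G)
    (hmin : IsMinValidFactor G H) (c : H.ConnectedComponent)
    (hpath : ∃ v ∈ c.supp, Nat.card (H.neighborSet v) = 1)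
    (y y' : V) (hy : y ∈ c.supp) (hy' : y' ∈ c.supp) (x x' : V)
    (hxy : G.Adj x y) (hx'y' : G.Adj x' y')
    (hx : OddCycleComp H (H.connectedComponentMk x))
    (hx' : OddCycleComp H (H.connectedComponentMk x')) :
    H.connectedComponentMk x = H.connectedComponentMk x' := by
  by_contra hne
  obtain ⟨⟨hval, hmin1⟩, hmin2⟩ := hmin
  obtain ⟨hHG, hHd, hHv⟩ := hval
  replace hHd : Aux13.Dok H := hHd
  have hnum : ∀ L : SimpleGraph V, L ≤ G → Aux13.Dok L → numComponents H ≤ numComponents L := by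
    intro L h1 h2
    obtain ⟨M, hM, hM'⟩ := Aux13.fix h1 h2
    rw [← hM']; exact hmin1 M hM
  have hxc : ∀ v, H.Reachable x v → Aux13.dg H v = 2 := fun v hv =>
    hx.2 v (SimpleGraph.ConnectedComponent.sound hv.symm)
  have hx'c : ∀ v, H.Reachable x' v → Aux13.dg H v = 2 := fun v hv =>
    hx'.2 v (SimpleGraph.ConnectedComponent.sound hv.symm)
  have hxx' : ¬ H.Reachable x x' := fun h => hne (SimpleGraph.ConnectedComponent.sound h)
  obtain ⟨w0, hw0, hw1⟩ := hpath
  replace hw1 : Aux13.dg H w0 = 1 := hw1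
  have hyw : H.Reachable y w0 := SimpleGraph.ConnectedComponent.exact (hy.trans hw0.symm)
  have hyy' : H.Reachable y y' := SimpleGraph.ConnectedComponent.exact (hy.trans hy'.symm)
  have hxny : ∀ v, H.Reachable y v → ¬ H.Reachable x v := fun v h1 h2 => by
    have := hxc w0 (h2.trans (h1.symm.trans hyw))
    omega
  have hx'ny : ∀ v, H.Reachable y v → ¬ H.Reachable x' v := fun v h1 h2 => by
    have := hx'c w0 (h2.trans (h1.symm.trans hyw))
    omega
  -- end vertices are not joined to cycles
  have hend : ∀ s t, (∀ v, H.Reachable s v → Aux13.dg H v = 2) → Aux13.dg H t = 1 →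
      ¬ G.Adj s t := by
    intro s t hs ht hst
    obtain ⟨L, hL1, hL2, hL3⟩ := Aux13.merge_end hHG hHd hs ht hst
    have := hnum L hL1 hL2
    omega
  have hy2 : Aux13.dg H y = 2 := by
    have h1 := hHd y
    have h2 : ¬ Aux13.dg H y = 1 := fun h => hend x y hxc h hxy
    omega
  have hy'2 : Aux13.dg H y' = 2 := by
    have h1 := hHd y'
    have h2 : ¬ Aux13.dg H y' = 1 := fun h => hend x' y' hx'c h hx'y'
    omega
  have hyne : y ≠ y' := by
    rintro rfl
    have hsub : insert x (insert x' (H.neighborSet y)) ⊆ G.neighborSet y := by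
      intro v hv
      rcases hv with rfl | rfl | hv
      · exact hxy.symm
      · exact hx'y'.symm
      · exact hHG hv
    have h1 := Set.ncard_le_ncard hsub (Set.toFinite _)
    rw [Set.ncard_insert_of_notMem _ (Set.toFinite _),
      Set.ncard_insert_of_notMem _ (Set.toFinite _)] at h1
    · have h2 : (H.neighborSet y).ncard = 2 := hy2
      have h3 : (G.neighborSet y).ncard = 3 := hG y
      omega
    · intro h
      exact hx'ny x' (SimpleGraph.Adj.reachable h) (SimpleGraph.Reachable.refl _)
    · rintro (rfl | h)
      · exact hxx' (SimpleGraph.Reachable.refl _)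
      · exact hxny x (SimpleGraph.Adj.reachable h) (SimpleGraph.Reachable.refl _)
  obtain ⟨z, hyz, hzy'⟩ := Aux13.first_step hyy' hyne
  set K := Aux13.dl H y z with hKdef
  have hKH : K ≤ H := Aux13.dl_le H y z
  have hKy := Aux13.dg_dl_left H hyz
  have hKz := Aux13.dg_dl_right H hyz
  rw [← hKdef] at hKy hKz
  have hz2 : Aux13.dg H z = 2 := by
    by_cases hzy : z = y'
    · rw [hzy]; exact hy'2
    · have hpos : 1 ≤ Aux13.dg K z := by
        obtain ⟨z2, hz2, -⟩ := Aux13.first_step hzy' hzy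
        have : (K.neighborSet z).ncard ≠ 0 := by
          intro h0
          rw [Set.ncard_eq_zero (Set.toFinite _)] at h0
          have : z2 ∈ K.neighborSet z := hz2
          rw [h0] at this
          exact this
        exact Nat.one_le_iff_ne_zero.2 this
      have := hHd z
      omega
  have hKother : ∀ v, v ≠ y → v ≠ z → Aux13.dg K v = Aux13.dg H v :=
    fun v h1 h2 => Aux13.dg_dl_other H h1 h2
  have hKd : Aux13.Dok K := by
    intro v
    by_cases h1 : v = y
    · subst h1; omega
    by_cases h2 : v = z
    · subst h2; omega
    rw [hKother v h1 h2]; exact hHd v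
  have hKyz : ¬ K.Reachable y z := by
    intro h
    have hw0y : w0 ≠ y := by rintro rfl; omega
    have hw0z : w0 ≠ z := by rintro rfl; omega
    exact Aux13.no_three hKd hyz.ne hw0y.symm hw0z.symm h
      ((Aux13.reach_dl h y w0).2 hyw) (by omega) (by omega)
      (by rw [hKother w0 hw0y hw0z]; exact hw1)
  have hKxc : ∀ v, K.Reachable x v → Aux13.dg K v = 2 := by
    intro v hv
    have hv' := hv.mono hKH
    rw [hKother v]
    · exact hxc v hv'
    · rintro rfl; exact hxny v (SimpleGraph.Reachable.refl _) hv'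
    · rintro rfl; exact hxny v hyz.reachable hv'
  obtain ⟨a, hxa, hxar, hK2d, hK2x, hK2a⟩ := Aux13.open_cycle hKd hKxc
  set K2 := Aux13.dl K x a with hK2def
  have hK2K : K2 ≤ K := Aux13.dl_le K x a
  have hHxa : H.Adj x a := hKH hxa
  have hay : a ≠ y := by
    rintro rfl; exact hxny a (SimpleGraph.Reachable.refl _) hHxa.reachable
  have haz : a ≠ z := by
    rintro rfl; exact hxny a hyz.reachable hHxa.reachable
  have hxz : x ≠ z := by
    rintro rfl; exact hxny x hyz.reachable (SimpleGraph.Reachable.refl _)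
  have hK2other : ∀ v, v ≠ x → v ≠ a → Aux13.dg K2 v = Aux13.dg K v :=
    fun v h1 h2 => Aux13.dg_dl_other K h1 h2
  have hK2r : ∀ u v, K2.Reachable u v ↔ K.Reachable u v := Aux13.reach_dl hxar
  have hK2H : ∀ u v, K2.Reachable u v → H.Reachable u v :=
    fun u v h => h.mono (hK2K.trans hKH)
  have hK2xy : ¬ K2.Reachable x y := fun h =>
    hxny y (SimpleGraph.Reachable.refl _) (hK2H _ _ h)
  have hK2xyadj : ¬ K2.Adj x y := fun h => hK2xy h.reachable
  have hK2y : Aux13.dg K2 y = 1 := by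
    rw [hK2other y hxy.ne.symm hay.symm]; omega
  set A := Aux13.jn K2 x y with hAdef
  have hK2A : K2 ≤ A := Aux13.le_jn K2 x y
  have hAG : A ≤ G := Aux13.jn_leG ((hK2K.trans hKH).trans hHG) hxy
  have hAd : Aux13.Dok A := Aux13.join_ok hK2d hxy.ne hK2xyadj hK2x hK2y
  have hAx : Aux13.dg A x = 2 := by
    rw [hAdef, Aux13.dg_jn_left K2 hxy.ne hK2xyadj, hK2x]
  have hAy : Aux13.dg A y = 2 := by
    rw [hAdef, Aux13.dg_jn_right K2 hxy.ne hK2xyadj, hK2y]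
  have hAa : Aux13.dg A a = 1 := by
    rw [hAdef, Aux13.dg_jn_other K2 hxy.ne hHxa.ne.symm hay, hK2a]
  have hAz : Aux13.dg A z = 1 := by
    rw [hAdef, Aux13.dg_jn_other K2 hxy.ne hxz.symm hyz.ne.symm, hK2other z hxz.symm haz.symm]
    omega
  have hAadj : ∀ u, u ≠ x → u ≠ y → u ≠ z → u ≠ a → ∀ v, A.Adj u v ↔ H.Adj u v := by
    intro u h1 h2 h3 h4 v
    rw [hAdef, Aux13.jn_adj K2 hxy.ne, hK2def, Aux13.dl_adj, hKdef, Aux13.dl_adj]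
    tauto
  have hAother : ∀ u, u ≠ x → u ≠ y → u ≠ z → u ≠ a → Aux13.dg A u = Aux13.dg H u :=
    fun u h1 h2 h3 h4 => Aux13.dg_congr (hAadj u h1 h2 h3 h4)
  have hAnum : numComponents A ≤ numComponents H := by
    have h1 : numComponents A < numComponents K2 := Aux13.num_jn_lt hK2xy
    have h2 : numComponents K2 = numComponents K := Aux13.num_eq hK2r
    have h3 := Aux13.num_le_jn (K := K) hyz.ne
    rw [hKdef, Aux13.jn_dl H hyz, ← hKdef] at h3
    omega
  have hAxa : A.Reachable x a := hxar.mono hK2A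
  have hAxy : A.Reachable x y :=
    SimpleGraph.Adj.reachable ((Aux13.jn_adj K2 hxy.ne x y).2 (by tauto))
  have hAza : ¬ A.Reachable z a := by
    intro h
    rcases Aux13.reach_jn hxy.ne h with h | ⟨h | h, -⟩
    · exact hxny z hyz.reachable (hHxa.reachable.trans (hK2H _ _ h).symm)
    · exact hxny z hyz.reachable (hK2H _ _ h)
    · exact hKyz ((hK2r _ _).1 h)
  have hAx' : ∀ v, A.Reachable x' v → H.Reachable x' v := by
    intro v h
    rcases Aux13.reach_jn hxy.ne h with h | ⟨h | h, -⟩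
    · exact hK2H _ _ h
    · exact absurd (hK2H _ _ h) hxx'
    · exact absurd (SimpleGraph.Reachable.refl _) (hx'ny x' (hK2H _ _ h))
  have hAzy' : A.Reachable z y' := ((hK2r _ _).2 hzy').mono hK2A
  -- away from the modified part
  have haway : ∀ w, ¬ A.Reachable w a → ¬ A.Reachable w z → ∀ v, A.Reachable w v →
      v ≠ x ∧ v ≠ y ∧ v ≠ z ∧ v ≠ a := by
    intro w h1 h2 v hv
    refine ⟨?_, ?_, ?_, ?_⟩
    · rintro rfl; exact h1 (hv.trans hAxa)
    · rintro rfl; exact h1 (hv.trans (hAxy.symm.trans hAxa))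
    · rintro rfl; exact h2 hv
    · rintro rfl; exact h1 hv
  have hsame : ∀ w, ¬ A.Reachable w a → ¬ A.Reachable w z → ∀ v,
      A.Reachable w v ↔ H.Reachable w v := by
    intro w h1 h2 v
    constructor
    · intro h
      refine (Aux13.reach_closed (K := A) (fun v => A.Reachable w v ∧ H.Reachable w v) ?_
        ⟨SimpleGraph.Reachable.refl _, SimpleGraph.Reachable.refl _⟩ h).2
      rintro s t ⟨hs1, hs2⟩ hst
      obtain ⟨g1, g2, g3, g4⟩ := haway w h1 h2 s hs1
      exact ⟨hs1.trans hst.reachable,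
        hs2.trans ((hAadj s g1 g2 g3 g4 t).1 hst).reachable⟩
    · intro h
      refine Aux13.reach_closed (K := H) (fun v => A.Reachable w v) ?_
        (SimpleGraph.Reachable.refl _) h
      intro s t hs1 hst
      obtain ⟨g1, g2, g3, g4⟩ := haway w h1 h2 s hs1
      exact hs1.trans ((hAadj s g1 g2 g3 g4 t).2 hst).reachable
  have hac : ∀ v, H.Reachable a v → Aux13.dg H v = 2 :=
    fun v hv => hxc v (hHxa.reachable.trans hv)
  have hAend : ∀ v, Aux13.dg A v = 1 → ¬ A.Reachable v z → v ≠ a → Aux13.dg H v = 1 := by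
    intro v h1 h2 h3
    rw [← hAother v _ _ _ h3]
    · exact h1
    · rintro rfl; omega
    · rintro rfl; omega
    · rintro rfl; exact h2 (SimpleGraph.Reachable.refl _)
  have hAval : IsValidFactor G A := by
    refine ⟨hAG, hAd, ?_⟩
    intro d hodd u v hu hv huv hu1 hv1 huvG
    have hr : A.Reachable u v := SimpleGraph.ConnectedComponent.exact (hu.trans hv.symm)
    by_cases hua : A.Reachable u a
    · have huz : ¬ A.Reachable u z := fun h => hAza (h.symm.trans hua)
      have hvz : ¬ A.Reachable v z := fun h => huz (hr.trans h)
      by_cases h1 : u = a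
      · subst h1
        exact hend u v hac (hAend v hv1 hvz huv.symm) huvG
      by_cases h2 : v = a
      · subst h2
        exact hend v u hac (hAend u hu1 huz huv) huvG.symm
      exact Aux13.no_three hAd huv h1 h2 hr hua hu1 hv1 hAa
    by_cases huz : A.Reachable u z
    · have hnadj : ¬ A.Adj u v := Aux13.odd_not_adj hodd hu hu1 hv1
      have hBr := Aux13.reach_jn_iff huv hr
      have hBd := Aux13.join_ok hAd huv hnadj hu1 hv1
      have hBG := Aux13.jn_leG hAG huvG
      have hux' : ¬ A.Reachable x' u := fun h =>
        hx'ny z hyz.reachable (hAx' z (h.trans huz))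
      suffices hex : ∃ L, L ≤ G ∧ Aux13.Dok L ∧
          numComponents L < numComponents (Aux13.jn A u v) by
        obtain ⟨L, hL1, hL2, hL3⟩ := hex
        have h1 := hnum L hL1 hL2
        have h2 := Aux13.num_eq hBr
        omega
      refine Aux13.merge_cycles (x := x') (y := y') hBG hBd ?_ ?_ ?_ hx'y'
      · intro w hw
        rw [hBr] at hw
        have hwH := hAx' w hw
        have hwu : w ≠ u := by rintro rfl; exact hux' hw
        have hwv : w ≠ v := by rintro rfl; exact hux' (hw.trans hr.symm)
        rw [Aux13.dg_jn_other A huv hwu hwv, hAother w, hx'c w hwH]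
        · rintro rfl; exact hxx' hwH.symm
        · rintro rfl; exact hx'ny w (SimpleGraph.Reachable.refl _) hwH
        · rintro rfl; exact hx'ny w hyz.reachable hwH
        · rintro rfl; exact hxx' (hHxa.reachable.trans hwH.symm)
      · intro w hw
        rw [hBr] at hw
        have huw : A.Reachable u w := huz.trans (hAzy'.trans hw)
        by_cases hwu : w = u
        · subst hwu
          rw [Aux13.dg_jn_left A huv hnadj]
          show Aux13.dg A w + 1 = 2
          have : Aux13.dg A w = 1 := hu1
          omega
        by_cases hwv : w = v
        · subst hwv
          rw [Aux13.dg_jn_right A huv hnadj]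
          have : Aux13.dg A w = 1 := hv1
          omega
        rw [Aux13.dg_jn_other A huv hwu hwv]
        have h1 := hAd w
        have h2 : ¬ Aux13.dg A w = 1 := fun h => Aux13.no_three hAd huv (Ne.symm hwu) (Ne.symm hwv) hr huw hu1 hv1 h
        omega
      · intro h
        rw [hBr] at h
        exact hx'ny y' hyy' (hAx' _ h)
    · have hs := hsame u hua huz
      have hva : ¬ A.Reachable v a := fun h => hua (hr.trans h)
      have hvz : ¬ A.Reachable v z := fun h => huz (hr.trans h)
      have hd : d.supp = (H.connectedComponentMk u).supp := by
        rw [← (show A.connectedComponentMk u = d from hu), Aux13.supp_mk, Aux13.supp_mk]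
        ext w; exact hs w
      have hu' : u ∈ (H.connectedComponentMk u).supp := rfl
      have hv' : v ∈ (H.connectedComponentMk u).supp := hd ▸ hv
      refine hHv (H.connectedComponentMk u) (hd ▸ hodd) u v hu' hv' huv ?_ ?_ huvG
      · exact hAend u hu1 huz (fun h => hua (h ▸ SimpleGraph.Reachable.refl _))
      · exact hAend v hv1 hvz (fun h => hva (h ▸ SimpleGraph.Reachable.refl _))
  have hAnum' : numComponents A = numComponents H := le_antisymm hAnum (hmin1 A hAval)
  have hcount := hmin2 A hAval hAnum'
  rw [Aux13.numOdd_eq, Aux13.numOdd_eq] at hcount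
  have hss : Aux13.ocs A ⊂ Aux13.ocs H := by
    rw [Set.ssubset_iff_of_subset]
    · refine ⟨{v | H.Reachable x v}, ⟨x, rfl, ?_, fun v hv => hxc v hv⟩, ?_⟩
      · have := hx.1
        rw [Aux13.supp_mk] at this
        exact this
      · rintro ⟨w, hw, -, hw2⟩
        have h1 : x ∈ {v | A.Reachable w v} := hw ▸ (SimpleGraph.Reachable.refl x : H.Reachable x x)
        have h2 : a ∈ {v | A.Reachable w v} := SimpleGraph.Reachable.trans h1 hAxa
        rw [← hw] at h2
        have := hw2 a h2
        omega
    · rintro S ⟨w, rfl, h1, h2⟩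
      have hwa : ¬ A.Reachable w a := fun h => by
        have := h2 a h
        omega
      have hwz : ¬ A.Reachable w z := fun h => by
        have := h2 z h
        omega
      refine ⟨w, ?_, h1, ?_⟩
      · ext v; exact hsame w hwa hwz v
      · intro v hv
        obtain ⟨g1, g2, g3, g4⟩ := haway w hwa hwz v hv
        rw [← hAother v g1 g2 g3 g4]
        exact h2 v hv
  have := Set.ncard_lt_ncard hss (Set.toFinite _)
  omega
end
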